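/- arXiv:1810.03901 — 2 statements merged into one kernel-verified Lean document; each statement's English description precedes it below -/
import Mathlib

section
/- Let f ∈ ℬ be convenient and Newton nondegenerate. Then dim_ℂ gr^𝒩_1(ℬ/ℒ) = card{v ∈ ℕⁿ : ν(v) = 1} − n; that is, the multiplicity of 1 in the toric Newton spectrum of f equals the number of lattice points on the Newton boundary of P minus n. -/
open MvPolynomial

namespace ToricNewton

section
variable {σ : Type*} [Fintype σ] [DecidableEq σ]

/-- Coercion of a lattice point of `ℕ^σ` into `ℝ^σ`. -/
def natToR (v : σ → ℕ) : σ → ℝ := fun i => (v i : ℝ)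

/-- Coercion of an exponent (finitely supported) into `ℝ^σ`. -/
def toR (m : σ →₀ ℕ) : σ → ℝ := fun i => (m i : ℝ)

/-- The Newton polytope of a polynomial: the convex hull of `{0} ∪ supp f`. -/
noncomputable def newtonPolytope (f : MvPolynomial σ ℂ) : Set (σ → ℝ) :=
  convexHull ℝ ({0} ∪ (toR '' (f.support : Set (σ →₀ ℕ))))

/-- The Newton function `ν`, which for a convenient polynomial is the gauge
(Minkowski functional) of the Newton polytope. -/
noncomputable def nu (f : MvPolynomial σ ℂ) (x : σ → ℝ) : ℝ :=
  gauge (newtonPolytope f) x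

/-- `f` is convenient if for each variable `i` some pure power `uᵢ^k`, `k ≥ 1`,
occurs in `f` with nonzero coefficient. -/
def Convenient (f : MvPolynomial σ ℂ) : Prop :=
  ∀ i : σ, ∃ k : ℕ, 1 ≤ k ∧ f.coeff (Finsupp.single i k) ≠ 0

/-- `Δ` is a (nonempty exposed) closed face of `P`. -/
def IsFace (P Δ : Set (σ → ℝ)) : Prop :=
  Δ.Nonempty ∧ ∃ (l : (σ → ℝ) →ₗ[ℝ] ℝ) (c : ℝ),
    (∀ x ∈ P, l x ≤ c) ∧ Δ = {x ∈ P | l x = c}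

/-- A face of the Newton boundary: a closed face of the Newton polytope not
containing the origin. -/
def NBFace (f : MvPolynomial σ ℂ) (Δ : Set (σ → ℝ)) : Prop :=
  IsFace (newtonPolytope f) Δ ∧ (0 : σ → ℝ) ∉ Δ

open Classical in
/-- The truncation `g_Δ` of `g` to the monomials whose exponents lie in `Δ`. -/
noncomputable def faceRestrict (Δ : Set (σ → ℝ)) (g : MvPolynomial σ ℂ) : MvPolynomial σ ℂ :=
  ∑ m ∈ g.support, if toR m ∈ Δ then monomial m (g.coeff m) else 0

/-- `f` is Newton nondegenerate: for every closed face `Δ` of the Newton boundary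
the system `(u₁ ∂f/∂u₁)_Δ = ⋯ = (uₙ ∂f/∂uₙ)_Δ = 0` has no solution in `(ℂ*)ⁿ`. -/
def Nondegenerate (f : MvPolynomial σ ℂ) : Prop :=
  ∀ Δ : Set (σ → ℝ), NBFace f Δ →
    ¬ ∃ x : σ → ℂ, (∀ i, x i ≠ 0) ∧
        ∀ i, eval x (faceRestrict Δ (X i * pderiv i f)) = 0

/-- The ideal `ℒ` generated by the `uᵢ ∂f/∂uᵢ`. -/
noncomputable def LIdeal (f : MvPolynomial σ ℂ) : Ideal (MvPolynomial σ ℂ) :=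
  Ideal.span (Set.range fun i => X i * pderiv i f)

/-- The Jacobian ideal `ℐ` generated by the `∂f/∂uᵢ`. -/
noncomputable def IIdeal (f : MvPolynomial σ ℂ) : Ideal (MvPolynomial σ ℂ) :=
  Ideal.span (Set.range fun i => pderiv i f)

/-- The Newton filtration `𝒩_α ℬ`: the span of the monomials `u^m` with `ν(m) ≤ α`. -/
noncomputable def Nle (f : MvPolynomial σ ℂ) (α : ℝ) : Submodule ℂ (MvPolynomial σ ℂ) where
  carrier := {g | ∀ m ∈ g.support, nu f (toR m) ≤ α}
  zero_mem' := by simp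
  add_mem' := by
    intro a b ha hb m hm
    rcases Finset.mem_union.mp (MvPolynomial.support_add hm) with h | h
    · exact ha m h
    · exact hb m h
  smul_mem' := by
    intro c a ha m hm
    exact ha m (MvPolynomial.support_smul hm)

/-- The filtration `𝒩_{<α} ℬ`. -/
noncomputable def Nlt (f : MvPolynomial σ ℂ) (α : ℝ) : Submodule ℂ (MvPolynomial σ ℂ) where
  carrier := {g | ∀ m ∈ g.support, nu f (toR m) < α}
  zero_mem' := by simp
  add_mem' := by
    intro a b ha hb m hm
    rcases Finset.mem_union.mp (MvPolynomial.support_add hm) with h | h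
    · exact ha m h
    · exact hb m h
  smul_mem' := by
    intro c a ha m hm
    exact ha m (MvPolynomial.support_smul hm)

/-- The twisted filtration `W_α ℬ`: the span of the monomials `u^m` with
`ν(m + (1,…,1)) ≤ α`. -/
noncomputable def Wle (f : MvPolynomial σ ℂ) (α : ℝ) : Submodule ℂ (MvPolynomial σ ℂ) where
  carrier := {g | ∀ m ∈ g.support, nu f (toR m + 1) ≤ α}
  zero_mem' := by simp
  add_mem' := by
    intro a b ha hb m hm
    rcases Finset.mem_union.mp (MvPolynomial.support_add hm) with h | h
    · exact ha m h
    · exact hb m h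
  smul_mem' := by
    intro c a ha m hm
    exact ha m (MvPolynomial.support_smul hm)

/-- The twisted filtration `W_{<α} ℬ`. -/
noncomputable def Wlt (f : MvPolynomial σ ℂ) (α : ℝ) : Submodule ℂ (MvPolynomial σ ℂ) where
  carrier := {g | ∀ m ∈ g.support, nu f (toR m + 1) < α}
  zero_mem' := by simp
  add_mem' := by
    intro a b ha hb m hm
    rcases Finset.mem_union.mp (MvPolynomial.support_add hm) with h | h
    · exact ha m h
    · exact hb m h
  smul_mem' := by
    intro c a ha m hm
    exact ha m (MvPolynomial.support_smul hm)

/-- The graded piece `gr^𝒩_α(ℬ/ℒ) = (𝒩_α ℬ + ℒ)/(𝒩_{<α} ℬ + ℒ)`, realized as the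
image of `𝒩_α ℬ + ℒ` in `ℬ/(𝒩_{<α} ℬ + ℒ)`. -/
noncomputable def grN (f : MvPolynomial σ ℂ) (α : ℝ) :
    Submodule ℂ (MvPolynomial σ ℂ ⧸ (Nlt f α ⊔ (LIdeal f).restrictScalars ℂ)) :=
  Submodule.map (Nlt f α ⊔ (LIdeal f).restrictScalars ℂ).mkQ
    (Nle f α ⊔ (LIdeal f).restrictScalars ℂ)

/-- `dim_ℂ gr^𝒩_α(ℬ/ℒ)`. -/
noncomputable def grDim (f : MvPolynomial σ ℂ) (α : ℝ) : ℕ :=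
  Module.finrank ℂ (grN f α)

/-- The graded piece `gr^W_α(ℬ/ℐ) = (W_α ℬ + ℐ)/(W_{<α} ℬ + ℐ)`. -/
noncomputable def grW (f : MvPolynomial σ ℂ) (α : ℝ) :
    Submodule ℂ (MvPolynomial σ ℂ ⧸ (Wlt f α ⊔ (IIdeal f).restrictScalars ℂ)) :=
  Submodule.map (Wlt f α ⊔ (IIdeal f).restrictScalars ℂ).mkQ
    (Wle f α ⊔ (IIdeal f).restrictScalars ℂ)

/-- `dim_ℂ gr^W_α(ℬ/ℐ)`. -/
noncomputable def grWDim (f : MvPolynomial σ ℂ) (α : ℝ) : ℕ :=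
  Module.finrank ℂ (grW f α)

/-- The dimension of a face, i.e. of the direction of its affine span. -/
noncomputable def faceDim (Δ : Set (σ → ℝ)) : ℕ :=
  Module.finrank ℝ (affineSpan ℝ Δ).direction

/-- `Δ` is a simplex: the convex hull of an affinely independent family. -/
def IsSimplex (Δ : Set (σ → ℝ)) : Prop :=
  ∃ (k : ℕ) (p : Fin (k + 1) → (σ → ℝ)), AffineIndependent ℝ p ∧ Δ = convexHull ℝ (Set.range p)

/-- The union of the coordinate hyperplanes. -/
def coordHyperplanes (σ : Type*) : Set (σ → ℝ) := ⋃ i : σ, {x : σ → ℝ | x i = 0}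

/-- `Box(Δ)`: the set of combinations `Σ q_ℓ b_ℓ`, `q_ℓ ∈ [0,1)`, of the vertices
(extreme points) of `Δ`. -/
def Box (Δ : Set (σ → ℝ)) : Set (σ → ℝ) :=
  {x | ∃ s : Finset (σ → ℝ), ↑s ⊆ Δ.extremePoints ℝ ∧
      ∃ q : (σ → ℝ) → ℝ, (∀ b ∈ s, 0 ≤ q b ∧ q b < 1) ∧ x = ∑ b ∈ s, q b • b}

/-- `Δ ∈ ℱ(P)`: a closed face of the Newton polytope of `f` not contained in the
union of the coordinate hyperplanes. -/
def FcalMem (f : MvPolynomial σ ℂ) (Δ : Set (σ → ℝ)) : Prop :=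
  IsFace (newtonPolytope f) Δ ∧ ¬ Δ ⊆ coordHyperplanes σ

/-- `Box(P)`: the union of `Box(Δ)` over the closed faces of the Newton boundary
not contained in the union of the coordinate hyperplanes. -/
def BoxP (f : MvPolynomial σ ℂ) : Set (σ → ℝ) :=
  ⋃ Δ ∈ {Δ : Set (σ → ℝ) | NBFace f Δ ∧ ¬ Δ ⊆ coordHyperplanes σ}, Box Δ

/-- The cone `ℝ₊·Δ` over `Δ`. -/
def cone0 (Δ : Set (σ → ℝ)) : Set (σ → ℝ) :=
  {x | ∃ t : ℝ, 0 ≤ t ∧ ∃ y ∈ Δ, x = t • y}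

/-- The restriction of `f` obtained by setting the variables in `S` to zero. -/
noncomputable def restrictZero (S : Finset σ) (f : MvPolynomial σ ℂ) :
    MvPolynomial {j : σ // j ∉ S} ℂ :=
  aeval (fun j : σ => if h : j ∉ S then X (⟨j, h⟩ : {j : σ // j ∉ S}) else 0) f

end

end ToricNewton

/-! A generic small shift of the exponents gives every monomial a unique lexicographically optimal
representation as a nonnegative combination of the nonzero exponents `v` of `f`, and hence a degree
which perturbs the Newton function. With respect to this degree `ℂ[X_v]` acts on the associated
graded of `ℂ[u]`: `X_v` multiplies a monomial by `u^v` if this raises the degree by exactly `1`, and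
kills it otherwise. Nondegeneracy says that the leading parts `∑ v_i f_v X_v` of the `u_i ∂f/∂u_i`
have no common zero on the support of this action except the origin, so by the Nullstellensatz they
generate a power of every `X_v` up to the annihilator. The powers `X_v^k` have leading parts, for
the order on optimal representations, whose Koszul complex is split off one variable at a time by
an explicit homotopy; its exactness in high exterior degrees descends to the leading parts of the
`u_i ∂f/∂u_i`. The filtration is therefore strict on `ℒ`: an element of `ℒ` of degree at most `1`
is a combination of the `u_i ∂f/∂u_i` with constant coefficients. These `n` generators are
independent modulo `𝒩_{<1}`, as one sees on the largest pure power of each `u_i` in `f`, so they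
account for `n` of the lattice points with `ν = 1`. -/

namespace NewtonSpectrum

open ToricNewton

section LexOpt

open Filter Topology

variable {ι V : Type*}

lemma exists_nonneg_add_smul [Finite ι] {c d : ι → ℝ} (hc : 0 ≤ c) (hd : ∀ v, c v = 0 → 0 ≤ d v) :
    ∃ m : ℕ, m ≠ 0 ∧ 0 ≤ c + (m : ℝ)⁻¹ • d := by
  have hev (v : ι) : ∀ᶠ m : ℕ in atTop, 0 ≤ c v + (m : ℝ)⁻¹ * d v := by
    rcases (hc v).eq_or_lt' with h0 | hpos
    · exact Eventually.of_forall fun m => by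
        rw [h0, Pi.zero_apply, zero_add]
        exact mul_nonneg (by positivity) (hd v h0)
    · have hlim : Tendsto (fun m : ℕ => c v + (m : ℝ)⁻¹ * d v) atTop (𝓝 (c v)) := by
        simpa using (tendsto_inv_atTop_nhds_zero_nat (𝕜 := ℝ)).mul_const (d v) |>.const_add (c v)
      exact (hlim.eventually (lt_mem_nhds hpos)).mono fun _ h => h.le
  obtain ⟨m, hm, hm0⟩ := ((eventually_all.mpr hev).and (eventually_ne_atTop 0)).exists
  exact ⟨m, hm0, hm⟩

variable [Fintype ι]

lemma isCompact_nonneg_linearCombination_eq [NormedAddCommGroup V] [NormedSpace ℝ V] {p : ι → V}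
    {φ : V →ₗ[ℝ] ℝ} (hφ : ∀ v, 0 < φ (p v)) (x : V) :
    IsCompact {c : ι → ℝ | 0 ≤ c ∧ Fintype.linearCombination ℝ p c = x} := by
  refine (isCompact_Icc (a := (0 : ι → ℝ)) (b := fun v => φ x / φ (p v))).of_isClosed_subset
    (isClosed_Ici.inter (isClosed_singleton.preimage
      (Fintype.linearCombination ℝ p).continuous_of_finiteDimensional)) ?_
  rintro c ⟨hc, rfl⟩
  refine ⟨hc, fun v => (le_div_iff₀ (hφ v)).mpr ?_⟩
  simp only [Fintype.linearCombination_apply, map_sum, map_smul, smul_eq_mul]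
  exact Finset.single_le_sum (f := fun u => c u * φ (p u))
    (fun u _ => mul_nonneg (hc u) (hφ u).le) (Finset.mem_univ v)

/-- The objective of the lexicographic linear programme: the sum of the coordinates, ties being
broken by the lexicographic order of the coordinates. -/
noncomputable def lexKey : (ι → ℝ) →+ ℝ ×ₗ Lex (ι → ℝ) where
  toFun c := toLex (∑ v, c v, toLex c)
  map_zero' := by simp
  map_add' c d := by simp [Finset.sum_add_distrib]; rfl

lemma lexKey_injective : Function.Injective (lexKey : (ι → ℝ) → ℝ ×ₗ Lex (ι → ℝ)) :=
  fun _ _ h => toLex_inj.mp (congrArg Prod.snd (toLex_inj.mp h))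

variable [LinearOrder ι]

lemma sum_le_of_lexKey_le {c d : ι → ℝ} (h : lexKey c ≤ lexKey d) : ∑ v, c v ≤ ∑ v, d v := by
  rcases Prod.Lex.toLex_le_toLex.mp h with h | h
  exacts [h.le, h.1.le]

section Module

variable [AddCommGroup V] [Module ℝ V]

/-- `c` minimises `lexKey` among the nonnegative representations of the point `∑ c_v p_v`. -/
structure IsLexOpt (p : ι → V) (c : ι → ℝ) : Prop where
  nonneg : 0 ≤ c
  le : ∀ d, 0 ≤ d → Fintype.linearCombination ℝ p d = Fintype.linearCombination ℝ p c →
    lexKey c ≤ lexKey d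

variable {p : ι → V} {c d : ι → ℝ}

lemma IsLexOpt.eq (hc : IsLexOpt p c) (hd : IsLexOpt p d)
    (h : Fintype.linearCombination ℝ p c = Fintype.linearCombination ℝ p d) : c = d :=
  lexKey_injective (le_antisymm (hc.le d hd.nonneg h.symm) (hd.le c hc.nonneg h))

lemma IsLexOpt.of_support_subset (hc : IsLexOpt p c) (hd : 0 ≤ d)
    (hsub : ∀ v, c v = 0 → d v = 0) : IsLexOpt p d := by
  refine ⟨hd, fun e he hed => ?_⟩
  obtain ⟨m, hm0, hm⟩ := exists_nonneg_add_smul (d := e - d) hc.nonneg fun v hv => by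
    simpa [hsub v hv] using he v
  have hkey := hc.le _ hm (by rw [map_add, map_smul, map_sub, hed, sub_self, smul_zero, add_zero])
  rw [map_add, le_add_iff_nonneg_right] at hkey
  have := nsmul_nonneg hkey m
  rwa [← map_nsmul, ← Nat.cast_smul_eq_nsmul ℝ, smul_inv_smul₀ (Nat.cast_ne_zero.mpr hm0), map_sub,
    sub_nonneg] at this

lemma IsLexOpt.eq_zero_of_linearCombination_eq_zero (hc : IsLexOpt p c)
    (hsub : ∀ v, c v = 0 → d v = 0) (hd : Fintype.linearCombination ℝ p d = 0) : d = 0 := by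
  have hnonneg (e : ι → ℝ) (he : ∀ v, c v = 0 → e v = 0)
      (hp : Fintype.linearCombination ℝ p e = 0) : 0 ≤ lexKey e := by
    obtain ⟨m, hm0, hm⟩ := exists_nonneg_add_smul (d := e) hc.nonneg fun v hv => (he v hv).ge
    have hkey := hc.le _ hm (by rw [map_add, map_smul, hp, smul_zero, add_zero])
    rw [map_add, le_add_iff_nonneg_right] at hkey
    have := nsmul_nonneg hkey m
    rwa [← map_nsmul, ← Nat.cast_smul_eq_nsmul ℝ, smul_inv_smul₀ (Nat.cast_ne_zero.mpr hm0)] at this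
  have hneg := hnonneg (-d) (fun v hv => by simp [hsub v hv]) (by rw [map_neg, hd, neg_zero])
  rw [map_neg, neg_nonneg] at hneg
  exact lexKey_injective (by rw [map_zero]; exact le_antisymm hneg (hnonneg d hsub hd))

end Module

lemma exists_lex_le_of_isCompact {κ : Type*} [Finite κ] [LinearOrder κ] {K : Set (κ → ℝ)}
    (hK : IsCompact K) (hne : K.Nonempty) : ∃ x ∈ K, ∀ y ∈ K, toLex x ≤ toLex y := by
  cases nonempty_fintype κ
  suffices ∀ s : Finset κ, ∃ L ⊆ K, IsCompact L ∧ L.Nonempty ∧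
      (∀ x ∈ L, ∀ y ∈ L, ∀ i ∈ s, x i = y i) ∧
      ∀ x ∈ L, ∀ y ∈ K \ L, ∃ i ∈ s, (∀ j ∈ s, j < i → x j = y j) ∧ x i < y i by
    obtain ⟨L, hLK, -, ⟨x, hx⟩, heq, hlt⟩ := this Finset.univ
    refine ⟨x, hLK hx, fun y hy => ?_⟩
    by_cases hyL : y ∈ L
    · exact (congrArg toLex (funext fun i => heq x hx y hyL i (Finset.mem_univ i))).le
    · obtain ⟨i, -, hj, hi⟩ := hlt x hx y ⟨hy, hyL⟩
      exact le_of_lt ⟨i, fun j hji => hj j (Finset.mem_univ j) hji, hi⟩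
  intro s
  induction s using Finset.induction_on_max with
  | empty => exact ⟨K, subset_rfl, hK, hne, by simp, by simp⟩
  | insert a s ha ih =>
    obtain ⟨L, hLK, hL, hLne, heq, hlt⟩ := ih
    obtain ⟨x₀, hx₀, hmin⟩ := hL.exists_isMinOn hLne (continuous_apply a).continuousOn
    refine ⟨L ∩ {x | x a = x₀ a}, Set.inter_subset_left.trans hLK,
      hL.inter_right (isClosed_eq (continuous_apply a) continuous_const), ⟨x₀, hx₀, rfl⟩, ?_, ?_⟩
    · rintro x ⟨hxL, hxa⟩ y ⟨hyL, hya⟩ i hi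
      rcases Finset.mem_insert.mp hi with rfl | hi
      exacts [hxa.trans hya.symm, heq x hxL y hyL i hi]
    · rintro x ⟨hxL, hxa⟩ y ⟨hyK, hyL'⟩
      by_cases hyL : y ∈ L
      · have hya : x a < y a := hxa.trans_lt (lt_of_le_of_ne (hmin hyL) fun h => hyL' ⟨hyL, h.symm⟩)
        refine ⟨a, Finset.mem_insert_self a s, fun j hj hja => heq x hxL y hyL j ?_, hya⟩
        exact (Finset.mem_insert.mp hj).resolve_left hja.ne
      · obtain ⟨i, hi, hj, hlt⟩ := hlt x hxL y ⟨hyK, hyL⟩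
        refine ⟨i, Finset.mem_insert_of_mem hi, fun j hjs hji => hj j ?_ hji, hlt⟩
        exact (Finset.mem_insert.mp hjs).resolve_left fun h => (ha i hi).not_gt (h ▸ hji)

theorem exists_isLexOpt [NormedAddCommGroup V] [NormedSpace ℝ V] {p : ι → V} {φ : V →ₗ[ℝ] ℝ}
    (hφ : ∀ v, 0 < φ (p v)) {c₀ : ι → ℝ} (hc₀ : 0 ≤ c₀) : ∃ c, IsLexOpt p c ∧
      Fintype.linearCombination ℝ p c = Fintype.linearCombination ℝ p c₀ := by
  have hK := isCompact_nonneg_linearCombination_eq hφ (Fintype.linearCombination ℝ p c₀)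
  have hcont : Continuous fun c : ι → ℝ => ∑ v, c v := by fun_prop
  obtain ⟨c₁, hc₁, hmin⟩ := hK.exists_isMinOn ⟨c₀, hc₀, rfl⟩ hcont.continuousOn
  obtain ⟨c, ⟨⟨hc, hcx⟩, hcsum⟩, hlex⟩ := exists_lex_le_of_isCompact
    (hK.inter_right (isClosed_eq hcont (continuous_const (y := ∑ v, c₁ v)))) ⟨c₁, hc₁, rfl⟩
  refine ⟨c, ⟨hc, fun d hd hdx => Prod.Lex.toLex_le_toLex.mpr ?_⟩, hcx⟩
  have hle : ∑ v, c v ≤ ∑ v, d v := hcsum.le.trans (hmin ⟨hd, hdx.trans hcx⟩)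
  exact hle.lt_or_eq.imp_right fun h => ⟨h, hlex d ⟨⟨hd, hdx.trans hcx⟩, h.symm.trans hcsum⟩⟩

end LexOpt

section GenericShift

open MeasureTheory Module Topology
open scoped Finset

theorem exists_mem_notMem_affineSubspaces {E : Type*} [NormedAddCommGroup E] [NormedSpace ℝ E]
    [FiniteDimensional ℝ E] {S : Set (AffineSubspace ℝ E)} (hS : S.Countable) (hne : ⊤ ∉ S)
    {U : Set E} (hU : IsOpen U) (hUne : U.Nonempty) : ∃ w ∈ U, ∀ s ∈ S, w ∉ s := by
  borelize E
  by_contra! h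
  have hcover : U ⊆ ⋃ s ∈ S, (s : Set E) := fun w hw => by simpa using h w hw
  have hnull : Measure.addHaar (⋃ s ∈ S, (s : Set E)) = 0 :=
    (measure_biUnion_null_iff hS).mpr fun s hs =>
      Measure.addHaar_affineSubspace _ s fun htop => hne (htop ▸ hs)
  exact (hU.measure_pos Measure.addHaar hUne).ne' (measure_mono_null hcover hnull)

variable {σ ι : Type*}

lemma toR_zero : toR (0 : σ →₀ ℕ) = 0 := by
  ext i
  simp [toR]

lemma toR_add (a b : σ →₀ ℕ) : toR (a + b) = toR a + toR b := by
  ext i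
  simp [toR]

lemma toR_nsmul (k : ℕ) (a : σ →₀ ℕ) : toR (k • a) = (k : ℝ) • toR a := by
  ext i
  simp [toR]

/-- A family of exponents containing no zero vector and a positive multiple of every basis
vector. -/
structure IsConvenientFamily (p : ι → σ →₀ ℕ) : Prop where
  ne_zero : ∀ v, p v ≠ 0
  exists_single : ∀ i, ∃ v, ∃ k : ℕ, k ≠ 0 ∧ p v = Finsupp.single i k

variable [Fintype σ]

/-- A small positive vector `shift` such that no translate `a + shift` of an exponent lies in a
proper subspace spanned by members of the convenient family `p`. -/
structure GenericShift (p : ι → σ →₀ ℕ) where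
  convenient : IsConvenientFamily p
  shift : σ → ℝ
  pos : ∀ i, 0 < shift i
  lt_one : ∀ i, shift i < 1
  mul_sum_lt_one : ∀ v i, p v i * ∑ j, shift j < 1
  span_eq_top : ∀ (a : σ →₀ ℕ) (T : Set ι),
    toR a + shift ∈ Submodule.span ℝ ((toR ∘ p) '' T) → Submodule.span ℝ ((toR ∘ p) '' T) = ⊤

theorem IsConvenientFamily.nonempty_genericShift [Finite ι] {p : ι → σ →₀ ℕ}
    (hp : IsConvenientFamily p) : Nonempty (GenericShift p) := by
  let spanOf (T : Set ι) : Submodule ℝ (σ → ℝ) := Submodule.span ℝ ((toR ∘ p) '' T)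
  let S : Set (AffineSubspace ℝ (σ → ℝ)) :=
    (fun q : (σ →₀ ℕ) × Set ι => AffineSubspace.mk' (-toR q.1) (spanOf q.2)) ''
      {q | spanOf q.2 ≠ ⊤}
  have hS : ⊤ ∉ S := by
    rintro ⟨q, hq, htop⟩
    exact hq (by simpa using congrArg AffineSubspace.direction htop)
  let V : Set (σ → ℝ) := {w | ∀ i, w i < 1} ∩ {w | ∀ v i, p v i * ∑ j, w j < 1}
  have hV : IsOpen V := by
    simp only [V, Set.ofPred_forall]
    exact (isOpen_iInter_of_finite fun i => isOpen_lt (by fun_prop) (by fun_prop)).inter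
      (isOpen_iInter_of_finite fun v => isOpen_iInter_of_finite fun i =>
        isOpen_lt (by fun_prop) (by fun_prop))
  have hpos : IsOpen {w : σ → ℝ | ∀ i, 0 < w i} := by
    simp only [Set.ofPred_forall]
    exact isOpen_iInter_of_finite fun i => isOpen_lt (by fun_prop) (by fun_prop)
  have hne : (V ∩ {w | ∀ i, 0 < w i}).Nonempty := by
    have hcont : Continuous fun (δ : ℝ) (_ : σ) => δ := by fun_prop
    have hnear : ∀ᶠ δ : ℝ in 𝓝[>] 0, (fun _ => δ) ∈ V :=
      (hcont.tendsto 0).eventually (hV.mem_nhds ⟨by simp, by simp⟩) |>.filter_mono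
        nhdsWithin_le_nhds
    obtain ⟨δ, hδV, hδ⟩ := (hnear.and self_mem_nhdsWithin).exists
    exact ⟨_, hδV, fun _ => hδ⟩
  obtain ⟨w, ⟨⟨hlt, hmul⟩, hpos⟩, hw⟩ := exists_mem_notMem_affineSubspaces
    ((Set.to_countable _).image _) hS (hV.inter hpos) hne
  refine ⟨⟨hp, w, hpos, hlt, hmul, fun a T haT => ?_⟩⟩
  by_contra htop
  refine hw _ ⟨(a, T), htop, rfl⟩ (AffineSubspace.mem_mk'.mpr ?_)
  rwa [vsub_eq_sub, sub_neg_eq_add, add_comm]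

variable {p : ι → σ →₀ ℕ}

lemma IsConvenientFamily.sum_toR_pos (hp : IsConvenientFamily p) (v : ι) :
    0 < ∑ i, toR (p v) i := by
  obtain ⟨i, hi⟩ := Finsupp.ne_iff.mp (hp.ne_zero v)
  exact Finset.sum_pos' (fun j _ => Nat.cast_nonneg _)
    ⟨i, Finset.mem_univ i, Nat.cast_pos.mpr (Nat.pos_of_ne_zero hi)⟩

variable [Fintype ι]

lemma IsConvenientFamily.exists_nonneg_linearCombination_eq (hp : IsConvenientFamily p)
    {x : σ → ℝ} (hx : 0 ≤ x) : ∃ c : ι → ℝ, 0 ≤ c ∧ ∑ v, c v ≤ ∑ i, x i ∧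
      Fintype.linearCombination ℝ (toR ∘ p) c = x := by
  classical
  choose v k hk hv using hp.exists_single
  refine ⟨∑ i, Pi.single (v i) (x i / k i), Finset.sum_nonneg fun i _ =>
    Pi.single_nonneg.mpr (div_nonneg (hx i) (Nat.cast_nonneg _)), ?_, ?_⟩
  · simp only [Finset.sum_apply]
    rw [Finset.sum_comm]
    simp only [Finset.sum_pi_single', Finset.mem_univ, if_true]
    exact Finset.sum_le_sum fun i _ =>
      div_le_self (hx i) (Nat.one_le_cast.mpr (Nat.pos_of_ne_zero (hk i)))
  · ext j
    simp only [map_sum, Fintype.linearCombination_apply_single, Finset.sum_apply, Pi.smul_apply,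
      Function.comp_apply, hv, toR, Finsupp.single_apply, smul_eq_mul]
    rw [Finset.sum_eq_single j (fun i _ hij => by simp [hij]) (by simp)]
    simp [hk j]

namespace GenericShift

variable [LinearOrder ι] (W : GenericShift p) (a : σ →₀ ℕ)

lemma exists_isLexOpt_linearCombination_eq : ∃ c, IsLexOpt (toR ∘ p) c ∧
    Fintype.linearCombination ℝ (toR ∘ p) c = toR a + W.shift := by
  obtain ⟨c₀, hc₀, -, h⟩ := W.convenient.exists_nonneg_linearCombination_eq
    (x := toR a + W.shift) fun i => add_nonneg (Nat.cast_nonneg _) (W.pos i).le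
  rw [← h]
  exact exists_isLexOpt (φ := ∑ i, LinearMap.proj i)
    (fun v => by simpa using W.convenient.sum_toR_pos v) hc₀

/-- The lexicographically optimal coordinates of `a + shift` with respect to the exponents `p`. -/
noncomputable def coord : ι → ℝ := (W.exists_isLexOpt_linearCombination_eq a).choose

lemma isLexOpt_coord : IsLexOpt (toR ∘ p) (W.coord a) :=
  (W.exists_isLexOpt_linearCombination_eq a).choose_spec.1

lemma linearCombination_coord :
    Fintype.linearCombination ℝ (toR ∘ p) (W.coord a) = toR a + W.shift :=
  (W.exists_isLexOpt_linearCombination_eq a).choose_spec.2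

lemma sum_coord_mul (i : σ) : ∑ v, W.coord a v * p v i = a i + W.shift i := by
  simpa [Fintype.linearCombination_apply, toR] using congrFun (W.linearCombination_coord a) i

variable {W a}

lemma coord_nonneg (v : ι) : 0 ≤ W.coord a v := (W.isLexOpt_coord a).nonneg v

lemma coord_eq {c : ι → ℝ} (hc : IsLexOpt (toR ∘ p) c)
    (h : Fintype.linearCombination ℝ (toR ∘ p) c = toR a + W.shift) : W.coord a = c :=
  (W.isLexOpt_coord a).eq hc ((W.linearCombination_coord a).trans h.symm)

lemma lexKey_coord_le {c : ι → ℝ} (hc : 0 ≤ c)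
    (h : Fintype.linearCombination ℝ (toR ∘ p) c = toR a + W.shift) :
    lexKey (W.coord a) ≤ lexKey c :=
  (W.isLexOpt_coord a).le c hc (h.trans (W.linearCombination_coord a).symm)

lemma linearCombination_coord_add_single (k : ℕ) (v : ι) :
    Fintype.linearCombination ℝ (toR ∘ p) (W.coord a + Pi.single v (k : ℝ)) =
      toR (a + k • p v) + W.shift := by
  rw [map_add, linearCombination_coord, Fintype.linearCombination_apply_single, toR_add,
    toR_nsmul, Function.comp_apply, add_right_comm]

lemma lexKey_coord_add_le (k : ℕ) (v : ι) :
    lexKey (W.coord (a + k • p v)) ≤ lexKey (W.coord a + Pi.single v (k : ℝ)) :=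
  lexKey_coord_le (add_nonneg coord_nonneg (Pi.single_nonneg.mpr k.cast_nonneg))
    (linearCombination_coord_add_single k v)

lemma coord_add_of_pos {v : ι} (hv : 0 < W.coord a v) (k : ℕ) :
    W.coord (a + k • p v) = W.coord a + Pi.single v (k : ℝ) := by
  refine coord_eq ((W.isLexOpt_coord a).of_support_subset
    (add_nonneg coord_nonneg (Pi.single_nonneg.mpr k.cast_nonneg)) fun u hu => ?_)
    (linearCombination_coord_add_single k v)
  have huv : u ≠ v := by rintro rfl; exact hv.ne' hu
  simp [hu, huv]

lemma exists_eq_add_of_lt_coord {u : ι} {k : ℕ} (hu : k < W.coord a u) :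
    ∃ a', a = a' + k • p u ∧ W.coord a = W.coord a' + Pi.single u (k : ℝ) := by
  have hnonneg : 0 ≤ W.coord a - Pi.single u (k : ℝ) := by
    intro v
    rcases eq_or_ne v u with rfl | hvu
    · simpa using hu.le
    · simpa [hvu] using coord_nonneg v
  have hle : k • p u ≤ a := fun i => by
    have hsum : 0 ≤ ∑ v, (W.coord a v - (Pi.single u (k : ℝ) : ι → ℝ) v) * p v i :=
      Finset.sum_nonneg fun v _ => mul_nonneg (hnonneg v) (Nat.cast_nonneg _)
    simp only [sub_mul, Finset.sum_sub_distrib, sum_coord_mul,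
      Pi.single_apply, ite_mul, zero_mul, Finset.sum_ite_eq', Finset.mem_univ, if_true] at hsum
    have hlt : ((k * p u i : ℕ) : ℝ) < (a i + 1 : ℕ) := by push_cast; linarith [W.lt_one i]
    exact Nat.lt_succ_iff.mp (Nat.cast_lt.mp hlt)
  refine ⟨a - k • p u, (tsub_add_cancel_of_le hle).symm, ?_⟩
  rw [eq_comm, ← eq_sub_iff_add_eq]
  refine coord_eq ((W.isLexOpt_coord a).of_support_subset hnonneg fun v hv => ?_) ?_
  · have hvu : v ≠ u := by rintro rfl; exact (hu.trans_le hv.le).not_ge k.cast_nonneg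
    simp [hv, hvu]
  · rw [map_sub, linearCombination_coord, Fintype.linearCombination_apply_single,
      Function.comp_apply, ← toR_nsmul, sub_eq_iff_eq_add, add_right_comm, ← toR_add,
      tsub_add_cancel_of_le hle]

lemma linearIndepOn_support_coord : LinearIndepOn ℝ (toR ∘ p) {v | W.coord a v ≠ 0} := by
  refine linearIndepOn_iff.mpr fun l hl h => DFunLike.coe_injective ?_
  refine (W.isLexOpt_coord a).eq_zero_of_linearCombination_eq_zero (fun v hv => ?_) ?_
  · exact Finsupp.notMem_support_iff.mp fun hvl =>
      (Finsupp.mem_supported ℝ l).mp hl (Finset.mem_coe.mpr hvl) hv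
  · rw [← Finsupp.linearCombination_eq_fintype_linearCombination_apply ℝ,
      Finsupp.linearEquivFunOnFinite_symm_coe]
    exact h

lemma card_support_coord : #{v | W.coord a v ≠ 0} = Fintype.card σ := by
  have hspan : Submodule.span ℝ (Set.range fun v : {v | W.coord a v ≠ 0} => toR (p v)) = ⊤ := by
    have := W.span_eq_top a {v | W.coord a v ≠ 0} ?_
    · rwa [← Subtype.range_coe (s := {v | W.coord a v ≠ 0}), ← Set.range_comp] at this
    rw [← linearCombination_coord, Fintype.linearCombination_apply]
    refine Submodule.sum_mem _ fun v _ => ?_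
    by_cases hv : W.coord a v = 0
    · simp [hv]
    · exact Submodule.smul_mem _ _ (Submodule.subset_span ⟨v, hv, rfl⟩)
  rw [← Fintype.card_subtype, ← Module.finrank_fintype_fun_eq_card ℝ (η := σ),
    Module.finrank_eq_card_basis (Module.Basis.mk linearIndepOn_support_coord hspan.ge)]
  rfl

lemma lexKey_coord_add_lt {v : ι} (hv : W.coord a v = 0) {k : ℕ} (hk : k ≠ 0) :
    lexKey (W.coord (a + k • p v)) < lexKey (W.coord a + Pi.single v (k : ℝ)) := by
  refine (lexKey_coord_add_le k v).lt_of_ne fun h => ?_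
  have hlt : #{u | W.coord a u ≠ 0} < #{u | W.coord (a + k • p v) u ≠ 0} := by
    rw [lexKey_injective h]
    refine Finset.card_lt_card (Finset.ssubset_iff_of_subset ?_ |>.mpr ⟨v, ?_, ?_⟩)
    · intro u hu
      have single_nonneg : (0 : ι → ℝ) ≤ Pi.single v (k : ℝ) :=
        Pi.single_nonneg.mpr k.cast_nonneg
      simp only [Finset.mem_filter, Finset.mem_univ, true_and, Pi.add_apply] at hu ⊢
      exact (add_pos_of_pos_of_nonneg ((coord_nonneg u).lt_of_ne' hu)
        (single_nonneg u)).ne'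
    · simp [hv, hk]
    · simp [hv]
  simp only [card_support_coord, lt_irrefl] at hlt

variable (W a) in
/-- The degree of the monomial with exponent `a`: a generic perturbation of the Newton function. -/
noncomputable def deg : ℝ := ∑ v, W.coord a v

lemma deg_le {c : ι → ℝ} (hc : 0 ≤ c)
    (h : Fintype.linearCombination ℝ (toR ∘ p) c = toR a + W.shift) : W.deg a ≤ ∑ v, c v :=
  sum_le_of_lexKey_le (lexKey_coord_le hc h)

lemma deg_add_le (a : σ →₀ ℕ) (v : ι) : W.deg (a + p v) ≤ W.deg a + 1 := by
  simpa [deg, Finset.sum_add_distrib] using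
    sum_le_of_lexKey_le (lexKey_coord_add_le (W := W) (a := a) 1 v)

lemma deg_le_add_deg_zero {c : ι → ℝ} (hc : 0 ≤ c)
    (h : Fintype.linearCombination ℝ (toR ∘ p) c = toR a) : W.deg a ≤ ∑ v, c v + W.deg 0 := by
  rw [deg, deg, ← Finset.sum_add_distrib]
  exact deg_le (c := c + W.coord 0) (add_nonneg hc coord_nonneg)
    (by rw [map_add, h, linearCombination_coord, toR_zero, zero_add])

lemma deg_zero_le : W.deg 0 ≤ ∑ i, W.shift i := by
  obtain ⟨c, hc, hsum, h⟩ := W.convenient.exists_nonneg_linearCombination_eq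
    (x := W.shift) fun i => (W.pos i).le
  exact (deg_le hc (by rw [h, toR_zero, zero_add])).trans hsum

lemma deg_zero_lt (ha : a ≠ 0) : W.deg 0 < W.deg a := by
  obtain ⟨i, hi⟩ := Finsupp.ne_iff.mp ha
  have hi1 : (1 : ℝ) ≤ a i := Nat.one_le_cast.mpr (Nat.pos_of_ne_zero hi)
  have hs : 0 < ∑ j, W.shift j := Finset.sum_pos (fun j _ => W.pos j) ⟨i, Finset.mem_univ i⟩
  calc W.deg 0 ≤ ∑ j, W.shift j := deg_zero_le
    _ < (a i + W.shift i) * ∑ j, W.shift j := by nlinarith [W.pos i]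
    _ = ∑ v, W.coord a v * (p v i * ∑ j, W.shift j) := by
      rw [← sum_coord_mul, Finset.sum_mul]
      simp only [mul_assoc]
    _ ≤ W.deg a := Finset.sum_le_sum fun v _ =>
      mul_le_of_le_one_right (coord_nonneg v) (W.mul_sum_lt_one v i).le

variable (W) in
lemma finite_setOf_deg_le (r : ℝ) : {a | W.deg a ≤ r}.Finite := by
  classical
  refine (Set.finite_Iic (Finsupp.equivFunOnFinite.symm
    fun i => ⌊∑ v, r * p v i⌋₊)).subset fun a ha i => ?_
  refine Nat.le_floor (α := ℝ) ?_
  calc (a i : ℝ) ≤ ∑ v, W.coord a v * p v i := by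
        rw [sum_coord_mul]; exact le_add_of_nonneg_right (W.pos i).le
    _ ≤ ∑ v, r * p v i := Finset.sum_le_sum fun v _ =>
      mul_le_mul_of_nonneg_right ((Finset.single_le_sum (fun u _ => coord_nonneg u)
        (Finset.mem_univ v)).trans ha) (Nat.cast_nonneg _)

end GenericShift

end GenericShift

section TightAction

open Finsupp (linearCombination)

variable {σ ι : Type*} {p : ι → σ →₀ ℕ} {deg : (σ →₀ ℕ) → ℝ}

lemma deg_add_linearCombination_le (hslow : ∀ a v, deg (a + p v) ≤ deg a + 1) (a : σ →₀ ℕ)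
    (α : ι →₀ ℕ) : deg (a + linearCombination ℕ p α) ≤ deg a + α.degree := by
  induction α using Finsupp.induction_linear generalizing a with
  | zero => simp
  | add α β hα hβ =>
    rw [map_add, ← add_assoc, map_add, Nat.cast_add]
    linarith [hα a, hβ (a + linearCombination ℕ p α)]
  | single v k =>
    rw [Finsupp.linearCombination_single, Finsupp.degree_single]
    induction k with
    | zero => simp
    | succ k ih =>
      rw [succ_nsmul, ← add_assoc, Nat.cast_succ]
      linarith [hslow (a + k • p v) v]

/-- Multiplying `u ^ a` by the image of `X ^ α` under `X_v ↦ u ^ p_v` raises the degree by the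
full amount `|α|`. -/
def IsTight (p : ι → σ →₀ ℕ) (deg : (σ →₀ ℕ) → ℝ) (α : ι →₀ ℕ) (a : σ →₀ ℕ) : Prop :=
  deg (a + linearCombination ℕ p α) = deg a + α.degree

lemma isTight_zero (a : σ →₀ ℕ) : IsTight p deg 0 a := by
  simp [IsTight]

lemma isTight_add_iff (hslow : ∀ a v, deg (a + p v) ≤ deg a + 1) {α β : ι →₀ ℕ} {a : σ →₀ ℕ} :
    IsTight p deg (α + β) a ↔
      IsTight p deg β a ∧ IsTight p deg α (a + linearCombination ℕ p β) := by
  have hβ := deg_add_linearCombination_le hslow a β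
  have hα := deg_add_linearCombination_le hslow (a + linearCombination ℕ p β) α
  simp only [IsTight, add_comm α β, map_add, Nat.cast_add, ← add_assoc]
  constructor
  · intro h
    constructor <;> linarith
  · rintro ⟨h₁, h₂⟩
    rw [h₂, h₁]

open Classical in
/-- Multiplication by the image of `X ^ α` on the monomials where `α` is tight, zero on the
other monomials. -/
noncomputable def tightShift (K : Type*) [CommRing K] (p : ι → σ →₀ ℕ)
    (deg : (σ →₀ ℕ) → ℝ) (α : ι →₀ ℕ) : Module.End K (MvPolynomial σ K) :=
  (basisMonomials σ K).constr K fun a =>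
    if IsTight p deg α a then monomial (a + linearCombination ℕ p α) 1 else 0

variable {K : Type*} [CommRing K]

lemma tightShift_monomial_of_isTight {α : ι →₀ ℕ} {a : σ →₀ ℕ} (h : IsTight p deg α a) :
    tightShift K p deg α (monomial a 1) = monomial (a + linearCombination ℕ p α) 1 :=
  ((basisMonomials σ K).constr_basis K _ a).trans (if_pos h)

lemma tightShift_monomial_of_not_isTight {α : ι →₀ ℕ} {a : σ →₀ ℕ} (h : ¬IsTight p deg α a) :
    tightShift K p deg α (monomial a 1) = 0 :=
  ((basisMonomials σ K).constr_basis K _ a).trans (if_neg h)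

lemma tightShift_zero : tightShift K p deg 0 = 1 :=
  (basisMonomials σ K).ext fun a => by
    simp [tightShift_monomial_of_isTight (isTight_zero a)]

lemma tightShift_add (hslow : ∀ a v, deg (a + p v) ≤ deg a + 1) (α β : ι →₀ ℕ) :
    tightShift K p deg (α + β) = tightShift K p deg α * tightShift K p deg β := by
  refine (basisMonomials σ K).ext fun a => ?_
  rw [coe_basisMonomials, Module.End.mul_apply]
  have hadd := isTight_add_iff hslow (α := α) (β := β) (a := a)
  by_cases hβ : IsTight p deg β a
  · rw [tightShift_monomial_of_isTight hβ]
    by_cases hα : IsTight p deg α (a + linearCombination ℕ p β)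
    · rw [tightShift_monomial_of_isTight hα, tightShift_monomial_of_isTight (hadd.mpr ⟨hβ, hα⟩),
        map_add, add_assoc, add_comm (linearCombination ℕ p β)]
    · rw [tightShift_monomial_of_not_isTight hα,
        tightShift_monomial_of_not_isTight fun h => hα (hadd.mp h).2]
  · rw [tightShift_monomial_of_not_isTight hβ, map_zero,
      tightShift_monomial_of_not_isTight fun h => hβ (hadd.mp h).1]

variable (K) in
/-- The action of `K[X]` on `K[u]` through the graded ring of the filtration `deg`: the monomial
`X ^ α` acts by `tightShift`. -/
noncomputable def tightAction (hslow : ∀ a v, deg (a + p v) ≤ deg a + 1) :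
    MvPolynomial ι K →ₐ[K] Module.End K (MvPolynomial σ K) :=
  AddMonoidAlgebra.lift K _ _
    { toFun := fun α => tightShift K p deg α.toAdd
      map_one' := tightShift_zero
      map_mul' := fun _ _ => tightShift_add hslow _ _ }

variable {hslow : ∀ a v, deg (a + p v) ≤ deg a + 1}

lemma tightAction_monomial (α : ι →₀ ℕ) (c : K) :
    tightAction K hslow (monomial α c) = c • tightShift K p deg α :=
  AddMonoidAlgebra.lift_single ..

lemma monomial_sub_monomial_mem_ker {α β : ι →₀ ℕ} (hdeg : α.degree = β.degree)
    (h : linearCombination ℕ p α = linearCombination ℕ p β) :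
    monomial α (1 : K) - monomial β 1 ∈ RingHom.ker (tightAction K hslow) := by
  have htight (a : σ →₀ ℕ) : IsTight p deg α a ↔ IsTight p deg β a := by
    rw [IsTight, IsTight, hdeg, h]
  rw [RingHom.mem_ker, map_sub, tightAction_monomial, tightAction_monomial, sub_eq_zero]
  refine congrArg _ ((basisMonomials σ K).ext fun a => ?_)
  rw [coe_basisMonomials]
  by_cases ha : IsTight p deg β a
  · rw [tightShift_monomial_of_isTight ha, tightShift_monomial_of_isTight ((htight a).mpr ha), h]
  · rw [tightShift_monomial_of_not_isTight ha,
      tightShift_monomial_of_not_isTight (ha ∘ (htight a).mp)]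

lemma monomial_mem_ker {α β : ι →₀ ℕ} (hdeg : β.degree < α.degree)
    (h : linearCombination ℕ p α = linearCombination ℕ p β) :
    monomial α (1 : K) ∈ RingHom.ker (tightAction K hslow) := by
  rw [RingHom.mem_ker, tightAction_monomial, one_smul]
  refine (basisMonomials σ K).ext fun a => tightShift_monomial_of_not_isTight fun htight => ?_
  have hle := deg_add_linearCombination_le hslow a β
  rw [← h, htight, add_le_add_iff_left, Nat.cast_le] at hle
  exact hle.not_gt hdeg

end TightAction

section Koszul

variable {I : Type*}

open Classical in
/-- The sign of the transposition of `e_i` and `e_j` relative to a fixed well-order of the index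
type. -/
noncomputable def swapSign (i j : I) : ℤˣ := if WellOrderingRel j i then -1 else 1

lemma swapSign_comm {i j : I} (hij : i ≠ j) : swapSign i j = -swapSign j i := by
  rcases trichotomous_of WellOrderingRel i j with h | h | h
  · simp [swapSign, h, asymm h]
  · exact absurd h hij
  · simp [swapSign, h, asymm h]

variable {K E : Type*} [CommRing K] [AddCommGroup E] [Module K E]

lemma compLeft_mul (g h : Module.End K E) :
    (g * h).compLeft (Finset I) = g.compLeft (Finset I) * h.compLeft (Finset I) := rfl

lemma compLeft_sum (s : Finset I) (g : I → Module.End K E) :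
    (∑ i ∈ s, g i).compLeft (Finset I) = ∑ i ∈ s, (g i).compLeft (Finset I) := by
  ext1 z
  ext1 S
  simp

variable (K E) in
/-- The chains supported on the `e_S` with `S ⊆ s` and `m ≤ #S`. -/
def chainsOn (s : Finset I) (m : ℕ) : Submodule K (Finset I → E) where
  carrier := {z | ∀ S, z S ≠ 0 → S ⊆ s ∧ m ≤ S.card}
  zero_mem' S hS := absurd rfl hS
  add_mem' {z w} hz hw S hS := by
    by_cases h : z S = 0
    · exact hw S fun h' => hS (by simp [h, h'])
    · exact hz S h
  smul_mem' c z hz S hS := hz S fun h => hS (by simp [h])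

lemma chainsOn_mono {s t : Finset I} (h : s ⊆ t) (m : ℕ) : chainsOn K E s m ≤ chainsOn K E t m :=
  fun _ hz S hS => ⟨(hz S hS).1.trans h, (hz S hS).2⟩

lemma compLeft_mem_chainsOn (g : Module.End K E) {s : Finset I} {m : ℕ} {z : Finset I → E}
    (hz : z ∈ chainsOn K E s m) : g.compLeft (Finset I) z ∈ chainsOn K E s m :=
  fun S hS => hz S fun h => hS (by simp [h])

variable [DecidableEq I]

/-- The sign of sorting `e_i ∧ e_S`. -/
noncomputable def koszulSign (i : I) (S : Finset I) : ℤˣ := ∏ j ∈ S, swapSign i j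

lemma koszulSign_insert (i : I) {j : I} {S : Finset I} (hj : j ∉ S) :
    koszulSign i (insert j S) = swapSign i j * koszulSign i S :=
  Finset.prod_insert hj

lemma koszulSign_mul_insert {i j : I} {S : Finset I} (hij : i ≠ j) (hi : i ∉ S) (hj : j ∉ S) :
    koszulSign i S * koszulSign j (insert i S) =
      -(koszulSign j S * koszulSign i (insert j S)) := by
  rw [koszulSign_insert _ hi, koszulSign_insert _ hj, swapSign_comm hij]
  simp [mul_comm, mul_left_comm]

lemma koszulSign_insert_mul_insert {i j : I} {S : Finset I} (hij : i ≠ j) (hi : i ∉ S)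
    (hj : j ∉ S) :
    koszulSign i (insert j S) * koszulSign j (insert i S) = -(koszulSign j S * koszulSign i S) := by
  rw [koszulSign_insert _ hi, koszulSign_insert _ hj, swapSign_comm hij, neg_mul, neg_mul,
    mul_mul_mul_comm, Int.units_mul_self, one_mul, mul_comm]

variable (K E) in
/-- Contraction `∂_i` against the basis covector `e_i^*` on `E ⊗ Λ(K^I)`, whose elements are encoded
as functions `Finset I → E`: the value at `S` is the coefficient of `e_S`. -/
noncomputable def contract (i : I) : Module.End K (Finset I → E) where
  toFun z S := if i ∈ S then 0 else koszulSign i S • z (insert i S)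
  map_add' z w := by ext S; by_cases h : i ∈ S <;> simp [h]
  map_smul' c z := by ext S; by_cases h : i ∈ S <;> simp [h, smul_comm _ c]

variable (K E) in
/-- Exterior multiplication `ε_i` by the basis vector `e_i` on `E ⊗ Λ(K^I)`. -/
noncomputable def wedge (i : I) : Module.End K (Finset I → E) where
  toFun z S := if i ∈ S then koszulSign i (S.erase i) • z (S.erase i) else 0
  map_add' z w := by ext S; by_cases h : i ∈ S <;> simp [h]
  map_smul' c z := by ext S; by_cases h : i ∈ S <;> simp [h, smul_comm _ c]

lemma contract_apply (i : I) (z : Finset I → E) (S : Finset I) :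
    contract K E i z S = if i ∈ S then 0 else koszulSign i S • z (insert i S) := rfl

lemma wedge_apply (i : I) (z : Finset I → E) (S : Finset I) :
    wedge K E i z S = if i ∈ S then koszulSign i (S.erase i) • z (S.erase i) else 0 := rfl

lemma contract_mul_contract (i j : I) :
    contract K E i * contract K E j + contract K E j * contract K E i = 0 := by
  ext1 z
  ext1 S
  simp only [Module.End.mul_apply, LinearMap.add_apply, Pi.add_apply, contract_apply,
    Finset.mem_insert]
  rcases eq_or_ne i j with rfl | hij
  · simp
  by_cases hi : i ∈ S
  · simp [hi]
  by_cases hj : j ∈ S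
  · simp [hj]
  simp [hi, hj, hij, hij.symm, smul_smul, Finset.insert_comm i j, koszulSign_mul_insert hij hi hj]

lemma contract_mul_contract_self (i : I) : contract K E i * contract K E i = 0 := by
  ext1 z
  ext1 S
  simp [contract_apply]

lemma contract_mul_wedge_apply (i : I) (z : Finset I → E) (S : Finset I) :
    (contract K E i * wedge K E i) z S = if i ∈ S then 0 else z S := by
  by_cases hi : i ∈ S <;> simp [contract_apply, wedge_apply, hi, smul_smul]

lemma wedge_mul_contract_apply (i : I) (z : Finset I → E) (S : Finset I) :
    (wedge K E i * contract K E i) z S = if i ∈ S then z S else 0 := by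
  by_cases hi : i ∈ S <;> simp [contract_apply, wedge_apply, hi, smul_smul]

lemma contract_mul_wedge_self (i : I) :
    contract K E i * wedge K E i + wedge K E i * contract K E i = 1 := by
  ext1 z
  ext1 S
  rw [LinearMap.add_apply, Pi.add_apply, contract_mul_wedge_apply, wedge_mul_contract_apply]
  split_ifs <;> simp

lemma contract_mul_wedge_of_ne {i j : I} (hij : i ≠ j) :
    contract K E i * wedge K E j + wedge K E j * contract K E i = 0 := by
  ext1 z
  ext1 S
  by_cases hi : i ∈ S
  · simp [contract_apply, wedge_apply, hi, hij]
  by_cases hj : j ∈ S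
  · obtain ⟨T, hjT, rfl⟩ : ∃ T, j ∉ T ∧ insert j T = S :=
      ⟨S.erase j, Finset.notMem_erase j S, Finset.insert_erase hj⟩
    have hiT : i ∉ T := fun h => hi (Finset.mem_insert_of_mem h)
    simp [contract_apply, wedge_apply, hij, hij.symm, hiT, hjT, smul_smul, Finset.insert_comm i j,
      koszulSign_insert_mul_insert hij hiT hjT]
  · simp [contract_apply, wedge_apply, hi, hj, hij.symm]

lemma commute_compLeft_contract (g : Module.End K E) (i : I) :
    Commute (g.compLeft (Finset I)) (contract K E i) := by
  ext1 z
  ext1 S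
  by_cases hi : i ∈ S <;> simp [contract_apply, hi, Units.smul_def]

lemma commute_compLeft_wedge (g : Module.End K E) (i : I) :
    Commute (g.compLeft (Finset I)) (wedge K E i) := by
  ext1 z
  ext1 S
  by_cases hi : i ∈ S <;> simp [wedge_apply, hi, Units.smul_def]

/-- The Koszul differential of a family of operators on `E`, on chains `Finset I → E`. -/
noncomputable def koszul [Fintype I] (x : I → Module.End K E) : Module.End K (Finset I → E) :=
  ∑ i, (x i).compLeft (Finset I) * contract K E i

lemma koszul_apply [Fintype I] (x : I → Module.End K E) (z : Finset I → E) (S : Finset I) :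
    koszul x z S = ∑ i, if i ∈ S then 0 else koszulSign i S • x i (z (insert i S)) := by
  simp only [koszul, LinearMap.sum_apply, Finset.sum_apply, Module.End.mul_apply,
    LinearMap.compLeft_apply, Function.comp_apply, contract_apply]
  refine Finset.sum_congr rfl fun i _ => ?_
  split_ifs <;> simp [Units.smul_def]

lemma koszul_koszul [Fintype I] {x : I → Module.End K E}
    (hx : Pairwise fun i j => Commute (x i) (x j))
    (z : Finset I → E) : koszul x (koszul x z) = 0 := by
  suffices koszul x * koszul x = 0 from LinearMap.congr_fun this z
  rw [koszul, Finset.sum_mul_sum, ← Finset.sum_product']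
  have hterm (i j : I) : (x i).compLeft (Finset I) * contract K E i *
      ((x j).compLeft (Finset I) * contract K E j) =
        (x i * x j).compLeft (Finset I) * (contract K E i * contract K E j) := by
    rw [mul_assoc, ← mul_assoc (contract K E i), ← (commute_compLeft_contract (x j) i).eq,
      mul_assoc, ← mul_assoc, compLeft_mul]
  refine Finset.sum_involution (fun q _ => q.swap) ?_ ?_ (by simp) (by simp)
  · rintro ⟨i, j⟩ -
    rcases eq_or_ne i j with rfl | hij
    · simp [hterm, contract_mul_contract_self]
    · simp only [Prod.swap_prod_mk, hterm, (hx hij).eq]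
      rw [← mul_add, contract_mul_contract, mul_zero]
  · rintro ⟨i, j⟩ - hne heq
    obtain rfl : j = i := congrArg Prod.fst heq
    exact hne (by rw [hterm, contract_mul_contract_self, mul_zero])

lemma contract_mem_chainsOn {s : Finset I} {v : I} {m : ℕ} {z : Finset I → E}
    (hz : z ∈ chainsOn K E (insert v s) (m + 1)) : contract K E v z ∈ chainsOn K E s m := by
  intro S hS
  by_cases hv : v ∈ S
  · simp [contract_apply, hv] at hS
  have hne : z (insert v S) ≠ 0 := fun h => hS (by simp [contract_apply, h])
  obtain ⟨hsub, hcard⟩ := hz _ hne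
  rw [Finset.card_insert_of_notMem hv] at hcard
  exact ⟨(Finset.insert_subset_insert_iff hv).mp hsub, by lia⟩

lemma wedge_mem_chainsOn {s : Finset I} {i : I} {m : ℕ} {z : Finset I → E} (hi : i ∈ s)
    (hz : z ∈ chainsOn K E s m) : wedge K E i z ∈ chainsOn K E s (m + 1) := by
  intro S hS
  by_cases hiS : i ∈ S
  · obtain ⟨hsub, hcard⟩ := hz (S.erase i) fun h => hS (by simp [wedge_apply, h])
    have := Finset.card_erase_add_one hiS
    exact ⟨by rwa [← Finset.insert_erase hiS, Finset.insert_subset_iff, and_iff_right hi], by lia⟩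
  · simp [wedge_apply, hiS] at hS

lemma contract_eq_zero_of_notMem {s : Finset I} {v : I} (hv : v ∉ s) {m : ℕ} {z : Finset I → E}
    (hz : z ∈ chainsOn K E s m) : contract K E v z = 0 := by
  ext1 S
  by_contra hS
  exact hv ((hz _ fun h => hS (by simp [contract_apply, h])).1 (Finset.mem_insert_self v S))

/-- Exactness of the Koszul complex of `(x i)_{i ∈ s}` in exterior degrees `≥ m`. -/
def KoszulExact [Fintype I] (x : I → Module.End K E) (s : Finset I) (m : ℕ) : Prop :=
  ∀ z ∈ chainsOn K E s m, koszul x z = 0 → ∃ y ∈ chainsOn K E s (m + 1), koszul x y = z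

lemma koszul_mul_contract [Fintype I] (x : I → Module.End K E) (v : I) :
    koszul x * contract K E v + contract K E v * koszul x = 0 := by
  rw [koszul, Finset.sum_mul, Finset.mul_sum, ← Finset.sum_add_distrib]
  refine Finset.sum_eq_zero fun i _ => ?_
  rw [← mul_assoc (contract K E v), ← (commute_compLeft_contract (x i) v).eq, mul_assoc, mul_assoc,
    ← mul_add, contract_mul_contract, mul_zero]

lemma koszul_mul_wedge [Fintype I] {x : I → Module.End K E} {G : Module.End K E} {v : I}
    (hG : ∀ i ≠ v, Commute G (x i)) :
    koszul x * (G.compLeft (Finset I) * wedge K E v) +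
      G.compLeft (Finset I) * wedge K E v * koszul x =
        (x v * G).compLeft (Finset I) * (contract K E v * wedge K E v) +
          (G * x v).compLeft (Finset I) * (wedge K E v * contract K E v) := by
  have hterm (i : I) :
      (x i).compLeft (Finset I) * contract K E i * (G.compLeft (Finset I) * wedge K E v) +
        G.compLeft (Finset I) * wedge K E v * ((x i).compLeft (Finset I) * contract K E i) =
      (x i * G).compLeft (Finset I) * (contract K E i * wedge K E v) +
        (G * x i).compLeft (Finset I) * (wedge K E v * contract K E i) := by
    congr 1
    · rw [mul_assoc, ← mul_assoc (contract K E i), ← (commute_compLeft_contract G i).eq,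
        mul_assoc, ← mul_assoc, compLeft_mul]
    · rw [mul_assoc, ← mul_assoc (wedge K E v), ← (commute_compLeft_wedge (x i) v).eq, mul_assoc,
        ← mul_assoc, compLeft_mul]
  rw [koszul, Finset.sum_mul, Finset.mul_sum, ← Finset.sum_add_distrib,
    Finset.sum_congr rfl fun i _ => hterm i]
  refine Finset.sum_eq_single v (fun i _ hi => ?_) (by simp)
  rw [(hG i hi).eq, ← mul_add, contract_mul_wedge_of_ne hi, mul_zero]

lemma koszul_mul_wedge_of_commute [Fintype I] {x : I → Module.End K E} {G : Module.End K E}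
    (hG : ∀ i, Commute G (x i)) (v : I) :
    koszul x * (G.compLeft (Finset I) * wedge K E v) +
      G.compLeft (Finset I) * wedge K E v * koszul x = (G * x v).compLeft (Finset I) := by
  rw [koszul_mul_wedge fun i _ => hG i, (hG v).eq, ← mul_add, contract_mul_wedge_self, mul_one]

lemma koszul_mul_wedge_sub_sum [Fintype I] {x G : I → Module.End K E} {s : Finset I} {v : I}
    (hG : ∀ i j, Commute (G i) (x j)) (hxv : x v = ∑ i ∈ s, G i * x i) :
    koszul x * (wedge K E v - ∑ i ∈ s, (G i).compLeft (Finset I) * wedge K E i) +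
      (wedge K E v - ∑ i ∈ s, (G i).compLeft (Finset I) * wedge K E i) * koszul x = 0 := by
  have hone := koszul_mul_wedge_of_commute (x := x) (fun i => Commute.one_left (x i)) v
  have hterm i := koszul_mul_wedge_of_commute (x := x) (hG i) i
  rw [mul_sub, sub_mul, Finset.mul_sum, Finset.sum_mul, sub_add_sub_comm,
    ← Finset.sum_add_distrib, Finset.sum_congr rfl fun i _ => hterm i, ← compLeft_sum, ← hxv]
  exact sub_eq_zero.mpr hone

/-- A member of the family that is a combination of the others may be dropped at the cost of one
exterior degree: with `W = ε_v - ∑ G_i ε_i` one has `D W + W D = 0`, so `W z` is a cycle, and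
contracting `W z = D y` against `e_v` gives `z = -D (∂_v y)`. -/
theorem KoszulExact.of_insert [Fintype I] {x G : I → Module.End K E} {s : Finset I} {v : I} {m : ℕ}
    (hv : v ∉ s) (hG : ∀ i j, Commute (G i) (x j)) (hxv : x v = ∑ i ∈ s, G i * x i)
    (hex : KoszulExact x (insert v s) (m + 1)) : KoszulExact x s m := by
  intro z hz hDz
  set W : Module.End K (Finset I → E) :=
    wedge K E v - ∑ i ∈ s, (G i).compLeft (Finset I) * wedge K E i with hW
  have hWmem : W z ∈ chainsOn K E (insert v s) (m + 1) := by
    have hz' := chainsOn_mono (Finset.subset_insert v s) m hz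
    rw [hW, LinearMap.sub_apply, LinearMap.sum_apply]
    exact Submodule.sub_mem _ (wedge_mem_chainsOn (Finset.mem_insert_self v s) hz')
      (Submodule.sum_mem _ fun i hi =>
        compLeft_mem_chainsOn _ (wedge_mem_chainsOn (Finset.mem_insert_of_mem hi) hz'))
  have hanti : koszul x * W + W * koszul x = 0 := koszul_mul_wedge_sub_sum hG hxv
  have hcycle : koszul x (W z) = 0 := by simpa [hDz] using LinearMap.congr_fun hanti z
  obtain ⟨y, hy, hDy⟩ := hex _ hWmem hcycle
  refine ⟨-contract K E v y, Submodule.neg_mem _ (contract_mem_chainsOn hy), ?_⟩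
  have hvz := contract_eq_zero_of_notMem hv hz
  have hself : contract K E v (wedge K E v z) = z := by
    simpa [hvz] using LinearMap.congr_fun (contract_mul_wedge_self (K := K) v) z
  have hother (i : I) (hi : i ∈ s) :
      contract K E v ((G i).compLeft (Finset I) (wedge K E i z)) = 0 := by
    have hne : v ≠ i := fun h => hv (h ▸ hi)
    have h0 : contract K E v (wedge K E i z) = 0 := by
      simpa [hvz] using LinearMap.congr_fun (contract_mul_wedge_of_ne (K := K) hne) z
    rw [← Module.End.mul_apply, ← (commute_compLeft_contract (G i) v).eq, Module.End.mul_apply, h0,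
      map_zero]
  calc koszul x (-contract K E v y) = contract K E v (koszul x y) := by
        rw [map_neg, neg_eq_iff_add_eq_zero]
        exact LinearMap.congr_fun (koszul_mul_contract x v) y
    _ = z := by
        simp only [hDy, hW, LinearMap.sub_apply, LinearMap.sum_apply, Module.End.mul_apply, map_sub,
          map_sum, hself, Finset.sum_eq_zero hother, sub_zero]

theorem KoszulExact.of_union [Fintype I] {x : I → Module.End K E} {s t : Finset I} {m : ℕ}
    (hst : Disjoint s t)
    (hx : ∀ v ∈ t, ∃ G : I → Module.End K E,
      (∀ i j, Commute (G i) (x j)) ∧ x v = ∑ i ∈ s, G i * x i)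
    (hex : KoszulExact x (s ∪ t) (m + t.card)) : KoszulExact x s m := by
  induction t using Finset.induction_on with
  | empty => simpa using hex
  | insert v t hvt ih =>
    obtain ⟨hvs, hst⟩ := Finset.disjoint_insert_right.mp hst
    refine ih hst (fun v' hv' => hx v' (Finset.mem_insert_of_mem hv')) ?_
    obtain ⟨G, hG, hxv⟩ := hx v (Finset.mem_insert_self v t)
    rw [Finset.union_insert, Finset.card_insert_of_notMem hvt, ← add_assoc] at hex
    refine hex.of_insert (G := fun i => if i ∈ s then G i else 0)
      (by simp [hvs, hvt]) (fun i j => ?_) ?_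
    · split_ifs
      exacts [hG i j, Commute.zero_left _]
    · simp [hxv, ite_mul, Finset.sum_ite_mem, Finset.union_inter_cancel_left]

end Koszul

section FilteredExactness

open Module Submodule

variable {X K M N W : Type*} [CommRing K] [AddCommGroup M] [Module K M] [AddCommGroup N]
  [Module K N]

/-- The span of the basis vectors indexed by `P`. -/
noncomputable def spanOn (b : Basis X K M) (P : Set X) : Submodule K M := span K (b '' P)

variable {b : Basis X K M}

lemma basis_mem_spanOn {P : Set X} {x : X} (hx : x ∈ P) : b x ∈ spanOn b P :=
  subset_span ⟨x, hx, rfl⟩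

lemma mem_spanOn_iff {P : Set X} {z : M} : z ∈ spanOn b P ↔ ∀ x, b.repr z x ≠ 0 → x ∈ P := by
  simp [spanOn, b.mem_span_image, Set.subset_def]

lemma spanOn_mono {P Q : Set X} (h : P ⊆ Q) : spanOn b P ≤ spanOn b Q :=
  span_mono (Set.image_mono h)

lemma map_mem_of_mem_spanOn {P : Set X} {D : M →ₗ[K] N} {V : Submodule K N}
    (h : ∀ x ∈ P, D (b x) ∈ V) {z : M} (hz : z ∈ spanOn b P) : D z ∈ V := by
  refine (span_le (p := V.comap D)).mpr ?_ hz
  rintro _ ⟨x, hx, rfl⟩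
  exact h x hx

variable (b) (wt : X → W)

open Classical in
/-- Projection onto the span of the basis vectors of weight `w`. -/
noncomputable def weightProj (w : W) : End K M :=
  b.constr K fun x => if wt x = w then b x else 0

variable {b wt}

lemma weightProj_basis_of_eq {x : X} {w : W} (h : wt x = w) : weightProj b wt w (b x) = b x := by
  rw [weightProj, b.constr_basis, if_pos h]

lemma weightProj_basis_of_ne {x : X} {w : W} (h : wt x ≠ w) : weightProj b wt w (b x) = 0 := by
  rw [weightProj, b.constr_basis, if_neg h]

lemma weightProj_mem {w : W} {P : Set X} {z : M} (hz : z ∈ spanOn b P) :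
    weightProj b wt w z ∈ spanOn b {x ∈ P | wt x = w} := by
  refine map_mem_of_mem_spanOn (fun x hx => ?_) hz
  by_cases hw : wt x = w
  · rw [weightProj_basis_of_eq hw]
    exact basis_mem_spanOn ⟨hx, hw⟩
  · rw [weightProj_basis_of_ne hw]
    exact zero_mem _

lemma sub_weightProj_mem {w : W} {P : Set X} {z : M} (hz : z ∈ spanOn b P) :
    z - weightProj b wt w z ∈ spanOn b {x ∈ P | wt x ≠ w} := by
  refine map_mem_of_mem_spanOn (D := LinearMap.id - weightProj b wt w) (fun x hx => ?_) hz
  rw [LinearMap.sub_apply, LinearMap.id_apply]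
  by_cases hw : wt x = w
  · rw [weightProj_basis_of_eq hw, sub_self]
    exact zero_mem _
  · rw [weightProj_basis_of_ne hw, sub_zero]
    exact basis_mem_spanOn ⟨hx, hw⟩

lemma weightProj_eq_zero {w : W} {P : Set X} (hP : ∀ x ∈ P, wt x ≠ w) {z : M}
    (hz : z ∈ spanOn b P) : weightProj b wt w z = 0 :=
  (mem_bot K).mp <| map_mem_of_mem_spanOn
    (fun x hx => (mem_bot K).mpr (weightProj_basis_of_ne (hP x hx))) hz

lemma weightProj_eq_self {w : W} {P : Set X} (hP : ∀ x ∈ P, wt x = w) {z : M}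
    (hz : z ∈ spanOn b P) : weightProj b wt w z = z := by
  refine sub_eq_zero.mp ((mem_bot K).mp <| map_mem_of_mem_spanOn
    (D := weightProj b wt w - LinearMap.id) (fun x hx => (mem_bot K).mpr ?_) hz)
  rw [LinearMap.sub_apply, weightProj_basis_of_eq (hP x hx), LinearMap.id_apply, sub_self]

lemma weightProj_comm {D : End K M} (hD : ∀ x, D (b x) ∈ spanOn b {y | wt y = wt x})
    (w : W) (z : M) : weightProj b wt w (D z) = D (weightProj b wt w z) := by
  suffices weightProj b wt w ∘ₗ D = D ∘ₗ weightProj b wt w from LinearMap.congr_fun this z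
  refine b.ext fun x => ?_
  rw [LinearMap.comp_apply, LinearMap.comp_apply]
  by_cases hw : wt x = w
  · rw [weightProj_basis_of_eq hw]
    exact weightProj_eq_self (fun y (hy : wt y = wt x) => hy.trans hw) (hD x)
  · rw [weightProj_basis_of_ne hw, map_zero]
    exact weightProj_eq_zero (fun y (hy : wt y = wt x) => hy ▸ hw) (hD x)

variable [LinearOrder W]

/-- A leading part `D₀` of `D`: it preserves weights, and the rest of `D` lowers them. -/
structure IsLeadingPart (b : Basis X K M) (wt : X → W) (D₀ D : End K M) : Prop where
  homogeneous : ∀ x, D₀ (b x) ∈ spanOn b {y | wt y = wt x}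
  lowers : ∀ x, (D - D₀) (b x) ∈ spanOn b {y | wt y < wt x}

lemma IsLeadingPart.weightProj_map_top {D₀ D : End K M} (h : IsLeadingPart b wt D₀ D) {w : W}
    {z : M} (hz : z ∈ spanOn b {x | wt x ≤ w}) :
    weightProj b wt w (D z) = D₀ (weightProj b wt w z) := by
  have hlow : (D - D₀) z ∈ spanOn b {x | wt x < w} :=
    map_mem_of_mem_spanOn (fun x (hx : wt x ≤ w) =>
      spanOn_mono (fun y (hy : wt y < wt x) => lt_of_lt_of_le hy hx) (h.lowers x)) hz
  rw [← weightProj_comm h.homogeneous, ← sub_eq_zero, ← map_sub]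
  exact weightProj_eq_zero (fun x hx => ne_of_lt hx) hlow

lemma IsLeadingPart.exists_lower {D₀ D : End K M} (h : IsLeadingPart b wt D₀ D) {P Q : Set X}
    (hQ : ∀ x ∈ Q, D (b x) ∈ spanOn b P)
    (hexact : ∀ z ∈ spanOn b P, D₀ z = 0 → ∃ y ∈ spanOn b Q, D₀ y = z)
    {w : W} {z : M} (hzP : z ∈ spanOn b P) (hzw : z ∈ spanOn b {x | wt x ≤ w})
    (hDz : weightProj b wt w (D z) = 0) :
    ∃ y ∈ spanOn b Q, z - D y ∈ spanOn b P ∧ z - D y ∈ spanOn b {x | wt x < w} := by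
  have hzP' := weightProj_mem (w := w) (wt := wt) hzP
  obtain ⟨y, hyQ, hy⟩ := hexact (weightProj b wt w z) (spanOn_mono (Set.sep_subset _ _) hzP')
    (by rw [← h.weightProj_map_top hzw, hDz])
  have hy' := weightProj_mem (w := w) (wt := wt) hyQ
  have hyQ' := spanOn_mono (Set.sep_subset _ _) hy'
  have htop : D₀ (weightProj b wt w y) = weightProj b wt w z := by
    rw [← weightProj_comm h.homogeneous, hy]
    exact weightProj_eq_self (fun x hx => hx.2) hzP'
  refine ⟨_, hyQ', sub_mem hzP (map_mem_of_mem_spanOn hQ hyQ'), ?_⟩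
  have hlow : (D - D₀) (weightProj b wt w y) ∈ spanOn b {x | wt x < w} :=
    map_mem_of_mem_spanOn (fun x hx =>
      spanOn_mono (fun y (hy : wt y < wt x) => hx.2 ▸ hy) (h.lowers x)) hy'
  have hrest := spanOn_mono (fun x hx => lt_of_le_of_ne hx.1 hx.2)
    (sub_weightProj_mem (w := w) hzw)
  have hsplit : z - D (weightProj b wt w y) =
      (z - weightProj b wt w z) - (D - D₀) (weightProj b wt w y) := by
    rw [LinearMap.sub_apply, htop, sub_sub_sub_cancel_right]
  rw [hsplit]
  exact sub_mem hrest hlow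

theorem IsLeadingPart.exact {D₀ D : End K M} (h : IsLeadingPart b wt D₀ D)
    (hwf : WellFounded (InvImage (· < ·) wt)) (hDD : ∀ z, D (D z) = 0) {P Q : Set X}
    (hQ : ∀ x ∈ Q, D (b x) ∈ spanOn b P)
    (hexact : ∀ z ∈ spanOn b P, D₀ z = 0 → ∃ y ∈ spanOn b Q, D₀ y = z)
    {L : Set W} (hL : IsLowerSet L) {z : M} (hz : z ∈ spanOn b P)
    (hDz : D z ∈ spanOn b (wt ⁻¹' L)) :
    ∃ y ∈ spanOn b Q, z - D y ∈ spanOn b (wt ⁻¹' L) := by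
  have hmax (z : M) : z = 0 ∨ ∃ x, b.repr z x ≠ 0 ∧ z ∈ spanOn b {y | wt y ≤ wt x} := by
    rcases (b.repr z).support.eq_empty_or_nonempty with h0 | hne
    · exact .inl (by simpa using h0)
    · obtain ⟨x, hx, hmax⟩ := (b.repr z).support.exists_max_image wt hne
      exact .inr ⟨x, by simpa using hx, mem_spanOn_iff.mpr fun y hy => hmax y (by simpa using hy)⟩
  have hstep (x : X) : ∀ z ∈ spanOn b P, z ∈ spanOn b {y | wt y ≤ wt x} →
      D z ∈ spanOn b (wt ⁻¹' L) → ∃ y ∈ spanOn b Q, z - D y ∈ spanOn b (wt ⁻¹' L) := by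
    induction x using hwf.induction with
    | _ x ih =>
    intro z hz hzx hDz
    by_cases hxL : wt x ∈ L
    · refine ⟨0, zero_mem _, ?_⟩
      rw [map_zero, sub_zero]
      exact spanOn_mono (fun y (hy : wt y ≤ wt x) => hL hy hxL) hzx
    obtain ⟨y, hyQ, hzy, hlt⟩ := h.exists_lower hQ hexact hz hzx
      (weightProj_eq_zero (fun y (hy : wt y ∈ L) (hyx : wt y = wt x) => hxL (hyx ▸ hy)) hDz)
    rcases hmax (z - D y) with h0 | ⟨x', hx', hle⟩
    · exact ⟨y, hyQ, h0 ▸ zero_mem _⟩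
    obtain ⟨y', hy'Q, hy'⟩ := ih x' (mem_spanOn_iff.mp hlt x' hx') (z - D y) hzy hle
      (by rwa [map_sub, hDD, sub_zero])
    exact ⟨y + y', add_mem hyQ hy'Q, by rwa [map_add, ← sub_sub]⟩
  rcases hmax z with rfl | ⟨x, -, hx⟩
  exacts [⟨0, zero_mem _, by simp⟩, hstep x z hz hx hDz]

end FilteredExactness

section Farkas

variable {κ 𝕜 E : Type*} [Field 𝕜] [LinearOrder 𝕜] [IsStrictOrderedRing 𝕜] [AddCommGroup E]
  [Module 𝕜 E]

open PointedCone

lemma apply_nonneg_of_mem_hull {l : E →ₗ[𝕜] 𝕜} {s : Set E} (hl : ∀ x ∈ s, 0 ≤ l x) {y : E}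
    (hy : y ∈ hull 𝕜 s) : 0 ≤ l y := by
  induction hy using Submodule.span_induction with
  | mem x hx => exact hl x hx
  | zero => simp
  | add x y _ _ hx hy => rw [map_add]; exact add_nonneg hx hy
  | smul c x _ hx =>
    change 0 ≤ l ((c : 𝕜) • x)
    rw [map_smul]
    exact mul_nonneg c.2 hx

theorem mem_hull_or_exists_separating (s : Finset κ) (g : κ → E) (b : E) :
    b ∈ hull 𝕜 (g '' s) ∨ ∃ l : E →ₗ[𝕜] 𝕜, (∀ i ∈ s, 0 ≤ l (g i)) ∧ l b < 0 := by
  classical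
  induction s using Finset.induction_on generalizing g b with
  | empty =>
    by_cases hb : b = 0
    · simp [hb]
    · obtain ⟨l, hl⟩ := not_forall.mp fun h => hb ((Module.forall_dual_apply_eq_zero_iff 𝕜 b).mp h)
      rcases lt_or_gt_of_ne hl with h | h
      exacts [.inr ⟨l, by simp, h⟩, .inr ⟨-l, by simp, by simpa using h⟩]
  | insert j s _ ih =>
    rw [Finset.coe_insert, Set.image_insert_eq]
    rcases ih g b with hb | ⟨l, hl, hlb⟩
    · exact .inl (Submodule.span_mono (Set.subset_insert _ _) hb)
    by_cases hj : 0 ≤ l (g j)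
    · exact .inr ⟨l, Finset.forall_mem_insert _ _ _ |>.mpr ⟨hj, hl⟩, hlb⟩
    push Not at hj
    -- Project along `g j` onto the hyperplane `l = 0` and separate there.
    let pr : E →ₗ[𝕜] E := LinearMap.id - l.smulRight ((l (g j))⁻¹ • g j)
    have hpr (x : E) : pr x = x - (l x / l (g j)) • g j := by
      simp [pr, smul_smul, div_eq_mul_inv]
    rcases ih (pr ∘ g) (pr b) with hb | ⟨m, hm, hmb⟩
    · left
      rw [Set.image_comp] at hb
      obtain ⟨y, hy, hyb⟩ : ∃ y ∈ hull 𝕜 (g '' s), pr y = pr b := by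
        simpa using (Submodule.span_image (pr.restrictScalars _)).le hb
      have hly : 0 ≤ l y := apply_nonneg_of_mem_hull (by simpa using hl) hy
      have hby : b = ((l b - l y) / l (g j)) • g j + y := by
        rw [hpr, hpr] at hyb
        rw [sub_div, sub_smul, sub_add_eq_add_sub, add_sub_assoc, hyb, add_sub_cancel]
      rw [hby]
      exact add_mem (Submodule.smul_mem _
        (⟨_, div_nonneg_of_nonpos (by linarith) hj.le⟩ : {c : 𝕜 // 0 ≤ c})
          (Submodule.subset_span (Set.mem_insert _ _)))
        (Submodule.span_mono (Set.subset_insert _ _) hy)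
    · refine .inr ⟨m ∘ₗ pr, Finset.forall_mem_insert _ _ _ |>.mpr ⟨?_, hm⟩, hmb⟩
      simp [hpr, div_self hj.ne]

section Face

variable [Fintype κ] {g : κ → E} {T : Set κ}

lemma exists_functional_pos_of_notMem
    (hT : ∀ c d : κ → 𝕜, 0 ≤ c → 0 ≤ d → (∀ v ∉ T, d v = 0) →
      Fintype.linearCombination 𝕜 g c = Fintype.linearCombination 𝕜 g d → ∀ v ∉ T, c v = 0)
    {u : κ} (hu : u ∉ T) :
    ∃ l : E →ₗ[𝕜] 𝕜, (∀ v, 0 ≤ l (g v)) ∧ (∀ v ∈ T, l (g v) = 0) ∧ 0 < l (g u) := by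
  classical
  let e : E := ∑ v with v ∈ T, g v
  rcases mem_hull_or_exists_separating (𝕜 := 𝕜) Finset.univ (Option.elim · (-e) g) (-g u) with
    h | ⟨l, hl, hlu⟩
  · rw [Finset.coe_univ, Set.image_univ, Submodule.mem_span_range_iff_exists_fun] at h
    obtain ⟨c, hc⟩ := h
    have hsingle : (0 : κ → 𝕜) ≤ Pi.single u 1 := Pi.single_nonneg.mpr zero_le_one
    have hcu := hT ((fun v => (c (some v) : 𝕜)) + Pi.single u 1)
      (fun v => if v ∈ T then (c none : 𝕜) else 0)
      (fun v => add_nonneg (c (some v)).2 (hsingle v))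
      (fun v => by dsimp only; split_ifs; exacts [(c none).2, le_rfl])
      (fun v hv => if_neg hv) ?_ u hu
    · rw [Pi.add_apply, Pi.single_eq_same] at hcu
      linarith [(c (some u)).2]
    · simp only [Fintype.sum_option, Option.elim, smul_neg] at hc
      rw [neg_add_eq_iff_eq_add, ← sub_eq_add_neg, eq_sub_iff_add_eq] at hc
      rw [map_add, Fintype.linearCombination_apply_single, one_smul]
      simp only [Fintype.linearCombination_apply, ite_smul, zero_smul, ← Finset.sum_filter,
        ← Finset.smul_sum]
      exact hc
  · have hnonneg (v : κ) : 0 ≤ l (g v) := hl (some v) (Finset.mem_univ _)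
    have hle : ∑ v with v ∈ T, l (g v) ≤ 0 := by
      simpa [e, map_sum] using hl none (Finset.mem_univ _)
    refine ⟨l, hnonneg, fun v hv => (hnonneg v).antisymm' (le_trans ?_ hle), by simpa using hlu⟩
    exact Finset.single_le_sum (f := fun v => l (g v)) (fun v _ => hnonneg v) (by simpa)

/-- A face of a finitely generated cone is cut out by a supporting functional. -/
theorem exists_functional_eq_zero_iff
    (hT : ∀ c d : κ → 𝕜, 0 ≤ c → 0 ≤ d → (∀ v ∉ T, d v = 0) →
      Fintype.linearCombination 𝕜 g c = Fintype.linearCombination 𝕜 g d → ∀ v ∉ T, c v = 0) :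
    ∃ l : E →ₗ[𝕜] 𝕜, ∀ v, 0 ≤ l (g v) ∧ (l (g v) = 0 ↔ v ∈ T) := by
  classical
  have hsep (u : κ) (hu : u ∉ T) := exists_functional_pos_of_notMem hT hu
  choose! l hnonneg hzero hpos using hsep
  refine ⟨∑ u with u ∉ T, l u, fun v => ?_⟩
  rw [LinearMap.sum_apply]
  have hterm (u : κ) (hu : u ∈ Finset.univ.filter (· ∉ T)) : 0 ≤ l u (g v) :=
    hnonneg u (Finset.mem_filter.mp hu).2 v
  refine ⟨Finset.sum_nonneg hterm, fun h => ?_, fun hv => Finset.sum_eq_zero fun u hu =>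
    hzero u (Finset.mem_filter.mp hu).2 v hv⟩
  by_contra hv
  exact (hpos v hv).ne' ((Finset.sum_eq_zero_iff_of_nonneg hterm).mp h v (by simpa))

end Face

end Farkas

section ExponentFaces

open Finsupp (linearCombination)

lemma exists_natCast_eq_mul {κ : Type*} [Finite κ] {c : κ → ℚ} (hc : 0 ≤ c) :
    ∃ m : ℕ, m ≠ 0 ∧ ∃ a : κ → ℕ, ∀ v, (a v : ℚ) = m * c v := by
  obtain ⟨b, hb⟩ := IsLocalization.exist_integer_multiples_of_finite (nonZeroDivisors ℤ) c
  choose z hz using hb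
  refine ⟨(b : ℤ).natAbs, Int.natAbs_ne_zero.mpr (nonZeroDivisors.ne_zero b.2),
    fun v => (z v).natAbs, fun v => ?_⟩
  have hzv : (z v : ℚ) = b * c v := by simpa [Submonoid.smul_def] using hz v
  simp only [Nat.cast_natAbs, Int.cast_abs, hzv, abs_mul, abs_of_nonneg (hc v)]

variable {σ ι : Type*} {p : ι → σ →₀ ℕ} {T : Set ι}

lemma natCast_linearCombination_apply [Fintype ι] {R : Type*} [CommSemiring R] (p : ι → σ →₀ ℕ)
    (α : ι →₀ ℕ) (i : σ) : (linearCombination ℕ p α i : R) = ∑ v, (α v : R) * p v i := by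
  simp [Finsupp.linearCombination_apply, Finsupp.sum_fintype, Finsupp.finsetSum_apply]

lemma natCast_degree [Fintype ι] {R : Type*} [CommSemiring R] (α : ι →₀ ℕ) :
    (α.degree : R) = ∑ v, (α v : R) := by
  simp [Finsupp.degree_eq_sum]

lemma sum_eq_of_exponent_relation [Fintype ι]
    (h : ∀ α β : ι →₀ ℕ, (∀ v ∉ T, α v = 0) → linearCombination ℕ p α = linearCombination ℕ p β →
      β.degree ≤ α.degree → β.degree = α.degree ∧ ∀ v ∉ T, β v = 0)
    {c d : ι → ℚ} (hc : 0 ≤ c) (hd : 0 ≤ d) (hdT : ∀ v ∉ T, d v = 0)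
    (hcd : ∀ i, ∑ v, c v * p v i = ∑ v, d v * p v i) (hle : ∑ v, c v ≤ ∑ v, d v) :
    ∑ v, c v = ∑ v, d v ∧ ∀ v ∉ T, c v = 0 := by
  obtain ⟨m, hm, a, ha⟩ := exists_natCast_eq_mul (Sum.forall.mpr ⟨hc, hd⟩ : 0 ≤ Sum.elim c d)
  have hm' : (0 : ℚ) < m := by positivity
  let β := Finsupp.equivFunOnFinite.symm (a ∘ Sum.inl)
  let α := Finsupp.equivFunOnFinite.symm (a ∘ Sum.inr)
  have hβ (v : ι) : (β v : ℚ) = m * c v := ha (.inl v)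
  have hα (v : ι) : (α v : ℚ) = m * d v := ha (.inr v)
  have hβdeg : (β.degree : ℚ) = m * ∑ v, c v := by
    simp only [natCast_degree, hβ, Finset.mul_sum]
  have hαdeg : (α.degree : ℚ) = m * ∑ v, d v := by
    simp only [natCast_degree, hα, Finset.mul_sum]
  obtain ⟨hdeg, hβT⟩ := h α β (fun v hv => by simpa [hdT v hv] using hα v)
    (Finsupp.ext fun i => Nat.cast_injective (R := ℚ) (by
      simp only [natCast_linearCombination_apply, hα, hβ, mul_assoc, ← Finset.mul_sum, hcd]))
    ((Nat.cast_le (α := ℚ)).mp (by rw [hαdeg, hβdeg]; gcongr))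
  refine ⟨mul_left_cancel₀ hm'.ne' (by rw [← hβdeg, ← hαdeg, hdeg]), fun v hv => ?_⟩
  simpa [hβT v hv, hm] using hβ v

lemma exists_functional_toR_eq [Finite σ] (Λ : (σ → ℚ) →ₗ[ℚ] ℚ) :
    ∃ l : (σ → ℝ) →ₗ[ℝ] ℝ, ∀ a, l (toR a) = Λ fun i => a i := by
  classical
  cases nonempty_fintype σ
  refine ⟨∑ i, (Λ (Pi.single i 1) : ℝ) • LinearMap.proj i, fun a => ?_⟩
  rw [pi_eq_sum_univ' fun i => (a i : ℚ)]
  simp [toR, LinearMap.sum_apply, mul_comm]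

theorem exists_functional_le_iff [Finite ι] [Finite σ]
    (h : ∀ α β : ι →₀ ℕ, (∀ v ∉ T, α v = 0) → linearCombination ℕ p α = linearCombination ℕ p β →
      β.degree ≤ α.degree → β.degree = α.degree ∧ ∀ v ∉ T, β v = 0) :
    ∃ (l : (σ → ℝ) →ₗ[ℝ] ℝ) (s : ℝ), 0 < s ∧
      ∀ v, l (toR (p v)) ≤ s ∧ (l (toR (p v)) = s ↔ v ∈ T) := by
  cases nonempty_fintype ι
  -- The extra generator `(0, 1)` makes the functional positive there, hence `0 < s`.
  let g : Option ι → (σ → ℚ) × ℚ := (Option.elim · (0, 1) fun v => (fun i => p v i, 1))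
  obtain ⟨Λ, hΛ⟩ := exists_functional_eq_zero_iff (𝕜 := ℚ) (g := g) (T := some '' T)
      fun c d hc hd hdT hcd => by
    have hnone : d none = 0 := hdT none (by simp)
    have hfst (i : σ) : ∑ v, c (some v) * p v i = ∑ v, d (some v) * p v i := by
      simpa [Fintype.linearCombination_apply, g, Prod.fst_sum] using
        congrFun (congrArg Prod.fst hcd) i
    have hsnd : c none + ∑ v, c (some v) = ∑ v, d (some v) := by
      simpa [Fintype.linearCombination_apply, g, Prod.snd_sum, hnone] using congrArg Prod.snd hcd
    obtain ⟨hsum, hcT⟩ := sum_eq_of_exponent_relation h (fun v => hc (some v))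
      (fun v => hd (some v)) (fun v hv => hdT (some v) (by simpa using hv)) hfst
      (hsnd ▸ le_add_of_nonneg_left (hc none))
    rintro (_ | v) hv
    · linarith
    · exact hcT v (by simpa using hv)
  obtain ⟨l, hl⟩ := exists_functional_toR_eq (Λ ∘ₗ LinearMap.inl ℚ (σ → ℚ) ℚ)
  have hg (v : ι) : g (some v) = (fun i => (p v i : ℚ), 0) + (0, 1) := by simp [g]
  have hlΛ (v : ι) : (-l) (toR (p v)) = (Λ (0, 1) - Λ (g (some v)) : ℚ) := by
    rw [hg, map_add]
    simp [hl]
  refine ⟨-l, Λ (0, 1), ?_, fun v => ?_⟩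
  · have hnone := hΛ none
    simp only [Set.mem_image, reduceCtorEq, and_false, exists_false, iff_false] at hnone
    exact Rat.cast_pos.mpr (hnone.1.lt_of_ne' hnone.2)
  · obtain ⟨hnonneg, hiff⟩ := hΛ (some v)
    rw [(Option.some_injective _).mem_set_image] at hiff
    rw [hlΛ, Rat.cast_le, Rat.cast_inj, sub_eq_self, hiff]
    exact ⟨sub_le_self _ hnonneg, .rfl⟩

end ExponentFaces

section TorusPoint

open Finsupp (linearCombination)

lemma exists_comp_eq_of_ker_le {A M N : Type*} [AddCommGroup A] [DivisibleBy A ℤ] [AddCommGroup M]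
    [AddCommGroup N] {φ : M →ₗ[ℤ] N} {ψ : M →ₗ[ℤ] A} (h : LinearMap.ker φ ≤ LinearMap.ker ψ) :
    ∃ H : N →ₗ[ℤ] A, H ∘ₗ φ = ψ := by
  obtain ⟨H, hH⟩ := (Module.Baer.of_divisible A).extension_property
    ((LinearMap.ker φ).liftQ φ le_rfl)
    (LinearMap.ker_eq_bot.mp (Submodule.ker_liftQ_eq_bot _ _ _ le_rfl))
    ((LinearMap.ker φ).liftQ ψ h)
  exact ⟨H, LinearMap.ext fun m => LinearMap.congr_fun hH ((LinearMap.ker φ).mkQ m)⟩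

variable {σ ι A : Type*}

lemma linearCombination_int_natCast [AddCommGroup A] (q : ι → A) (α : ι →₀ ℕ) :
    linearCombination ℤ q (Finsupp.mapRange.addMonoidHom (Nat.castAddMonoidHom ℤ) α) =
      linearCombination ℕ q α := by
  simp [Finsupp.linearCombination_apply, Finsupp.sum_mapRange_index]

lemma exists_linearCombination_eq [AddCommGroup A] [DivisibleBy A ℤ] {p : ι → σ →₀ ℕ} {q : ι → A}
    (h : ∀ α β : ι →₀ ℕ, linearCombination ℕ p α = linearCombination ℕ p β →
      linearCombination ℕ q α = linearCombination ℕ q β) :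
    ∃ x : σ → A, ∀ v, linearCombination ℕ x (p v) = q v := by
  let castι : (ι →₀ ℕ) →+ (ι →₀ ℤ) := Finsupp.mapRange.addMonoidHom (Nat.castAddMonoidHom ℤ)
  let castσ : (σ →₀ ℕ) →+ (σ →₀ ℤ) := Finsupp.mapRange.addMonoidHom (Nat.castAddMonoidHom ℤ)
  have hcastσ : Function.Injective castσ :=
    Finsupp.mapRange_injective _ (by simp) Nat.cast_injective
  have hφ (α : ι →₀ ℕ) : linearCombination ℤ (castσ ∘ p) (castι α) =
      castσ (linearCombination ℕ p α) := by
    rw [linearCombination_int_natCast]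
    exact (Finsupp.apply_linearCombination ℕ castσ.toNatLinearMap p α).symm
  obtain ⟨H, hH⟩ := exists_comp_eq_of_ker_le (φ := linearCombination ℤ (castσ ∘ p))
    (ψ := linearCombination ℤ q) fun m hm => by
      obtain ⟨α, β, rfl⟩ : ∃ α β, m = castι α - castι β :=
        ⟨m.mapRange Int.toNat rfl, (-m).mapRange Int.toNat rfl, by ext v; simp [castι]⟩
      rw [LinearMap.mem_ker, map_sub, sub_eq_zero] at hm ⊢
      rw [hφ, hφ] at hm
      rw [linearCombination_int_natCast, linearCombination_int_natCast, h _ _ (hcastσ hm)]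
  refine ⟨fun i => H (Finsupp.single i 1), fun v => ?_⟩
  have hHx : linearCombination ℤ (fun i => H (Finsupp.single i 1)) = H :=
    Finsupp.lhom_ext' fun i => LinearMap.ext_ring (by simp)
  rw [← linearCombination_int_natCast, hHx]
  simpa [castσ] using LinearMap.congr_fun hH (Finsupp.single v 1)

variable {K : Type*} [Field K] [IsAlgClosed K]

noncomputable instance divisibleByUnits : DivisibleBy (Additive Kˣ) ℤ :=
  let _ : DivisibleBy (Additive Kˣ) ℕ :=
    divisibleByOfSMulRightSurj (Additive Kˣ) ℕ fun {n} hn x => by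
      obtain ⟨y, hy⟩ := IsAlgClosed.exists_pow_nat_eq (x.toMul : K) (Nat.pos_of_ne_zero hn)
      have hy0 : y ≠ 0 := by
        rintro rfl
        exact x.toMul.ne_zero (by rw [← hy, zero_pow hn])
      exact ⟨Additive.ofMul (Units.mk0 y hy0), Additive.toMul.injective (Units.ext hy)⟩
  AddGroup.divisibleByIntOfDivisibleByNat (Additive Kˣ)

theorem exists_units_prod_pow_eq {p : ι → σ →₀ ℕ} {q : ι → Kˣ}
    (h : ∀ α β : ι →₀ ℕ, linearCombination ℕ p α = linearCombination ℕ p β →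
      (α.prod fun v k => q v ^ k) = β.prod fun v k => q v ^ k) :
    ∃ x : σ → Kˣ, ∀ v, ((p v).prod fun i k => x i ^ k) = q v := by
  obtain ⟨x, hx⟩ := exists_linearCombination_eq (q := fun v => Additive.ofMul (q v)) h
  exact ⟨fun i => (x i).toMul, hx⟩

end TorusPoint

section EulerSymbol

open Finsupp (linearCombination)

variable {σ : Type*} {f : MvPolynomial σ ℂ}

lemma toR_mem_newtonPolytope {m : σ →₀ ℕ} (hm : m ∈ f.support) : toR m ∈ newtonPolytope f :=
  subset_convexHull ℝ _ (.inr ⟨m, hm, rfl⟩)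

lemma coeff_X_mul_pderiv (f : MvPolynomial σ ℂ) (i : σ) (m : σ →₀ ℕ) :
    (X i * pderiv i f).coeff m = m i * f.coeff m := by
  classical
  induction f using MvPolynomial.induction_on' with
  | monomial a c =>
    rw [X_mul_pderiv_monomial, coeff_smul, nsmul_eq_mul, coeff_monomial]
    split_ifs with h <;> simp [h]
  | add f g hf hg => rw [map_add, mul_add, coeff_add, hf, hg, coeff_add, mul_add]

variable [DecidableEq σ]

/-- The nonzero exponents of `f`, indexing the variables of the polynomial ring that acts on the
graded ring of the Newton filtration. -/
abbrev NonzeroExponent (f : MvPolynomial σ ℂ) : Type _ := ↥(f.support.erase 0)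

/-- The linear form `∑ v, v_i f_v X_v` which the substitution `X_v ↦ u ^ v` turns into
`u_i ∂f/∂u_i`. -/
noncomputable def eulerSymbol (f : MvPolynomial σ ℂ) (i : σ) :
    MvPolynomial (NonzeroExponent f) ℂ :=
  ∑ v : NonzeroExponent f, monomial (Finsupp.single v 1) (v.1 i * f.coeff v.1)

lemma aeval_eulerSymbol (q : NonzeroExponent f → ℂ) (i : σ) :
    aeval q (eulerSymbol f i) = ∑ v : NonzeroExponent f, v.1 i * f.coeff v.1 * q v := by
  simp [eulerSymbol, aeval_monomial]

lemma support_X_mul_pderiv_subset (f : MvPolynomial σ ℂ) (i : σ) :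
    (X i * pderiv i f).support ⊆ f.support.erase 0 := by
  intro m hm
  rw [mem_support_iff, coeff_X_mul_pderiv] at hm
  refine Finset.mem_erase.mpr ⟨?_, mem_support_iff.mpr (right_ne_zero_of_mul hm)⟩
  rintro rfl
  simp at hm

lemma X_mul_pderiv_eq_sum (f : MvPolynomial σ ℂ) (i : σ) :
    X i * pderiv i f = ∑ v : NonzeroExponent f, monomial v.1 (v.1 i * f.coeff v.1) := by
  rw [Finset.sum_coe_sort (f.support.erase 0) fun m => monomial m (m i * f.coeff m)]
  conv_lhs => rw [as_sum (X i * pderiv i f)]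
  rw [Finset.sum_subset (support_X_mul_pderiv_subset f i) fun m _ hm => by
    rw [notMem_support_iff.mp hm, monomial_zero]]
  simp only [coeff_X_mul_pderiv]

open Classical in
lemma eval_faceRestrict_X_mul_pderiv (Δ : Set (σ → ℝ)) (i : σ) (x : σ → ℂ) :
    eval x (faceRestrict Δ (X i * pderiv i f)) = ∑ v : NonzeroExponent f,
      if toR v.1 ∈ Δ then v.1 i * f.coeff v.1 * v.1.prod fun j k => x j ^ k else 0 := by
  rw [Finset.sum_coe_sort (f.support.erase 0) fun m =>
    if toR m ∈ Δ then m i * f.coeff m * m.prod fun j k => x j ^ k else 0, faceRestrict, map_sum,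
    Finset.sum_subset (support_X_mul_pderiv_subset f i) fun m _ hm => by
      rw [notMem_support_iff.mp hm]; simp]
  refine Finset.sum_congr rfl fun m _ => ?_
  rw [coeff_X_mul_pderiv, apply_ite (eval x), eval_monomial, map_zero]

lemma isNBFace_setOf_eq {l : (σ → ℝ) →ₗ[ℝ] ℝ} {s : ℝ} (hs : 0 < s)
    (hl : ∀ v : NonzeroExponent f, l (toR v.1) ≤ s) {v : NonzeroExponent f} (hv : l (toR v.1) = s) :
    NBFace f {y ∈ newtonPolytope f | l y = s} := by
  have hle : newtonPolytope f ⊆ {y | l y ≤ s} := by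
    refine convexHull_min ?_ (convex_halfSpace_le l.isLinear s)
    rintro _ (rfl | ⟨m, hm, rfl⟩)
    · simpa using hs.le
    · by_cases h : m = 0
      · simpa [h, toR_zero] using hs.le
      · exact hl ⟨m, Finset.mem_erase.mpr ⟨h, hm⟩⟩
  exact ⟨⟨⟨_, toR_mem_newtonPolytope (Finset.mem_of_mem_erase v.2), hv⟩, l, s, hle, rfl⟩,
    fun h => hs.ne (by simpa using h.2)⟩

lemma prod_pow_ne_zero_iff {ι : Type*} {q : ι → ℂ} {α : ι →₀ ℕ} :
    (α.prod fun v k => q v ^ k) ≠ 0 ↔ ∀ v, q v = 0 → α v = 0 := by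
  simp only [Finsupp.prod, ne_eq, Finset.prod_eq_zero_iff, Finsupp.mem_support_iff,
    pow_eq_zero_iff', not_exists, not_and, not_not]
  exact forall_congr' fun v => by tauto

variable {deg : (σ →₀ ℕ) → ℝ} {hslow : ∀ a (v : NonzeroExponent f), deg (a + v.1) ≤ deg a + 1}
  {q : NonzeroExponent f → ℂ}

lemma degree_eq_and_prod_eq_of_ker_vanishing
    (hker : ∀ r ∈ RingHom.ker (tightAction ℂ hslow), aeval q r = 0) {α β : NonzeroExponent f →₀ ℕ}
    (hα : ∀ v, q v = 0 → α v = 0)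
    (h : linearCombination ℕ Subtype.val α = linearCombination ℕ Subtype.val β)
    (hdeg : β.degree ≤ α.degree) :
    β.degree = α.degree ∧ (β.prod fun v k => q v ^ k) = α.prod fun v k => q v ^ k := by
  have hmon (γ : NonzeroExponent f →₀ ℕ) :
      aeval q (monomial γ (1 : ℂ)) = γ.prod fun v k => q v ^ k := by
    rw [aeval_monomial, map_one, one_mul]
  rcases hdeg.lt_or_eq with hlt | heq
  · exact absurd (hmon α ▸ hker _ (monomial_mem_ker hlt h)) (prod_pow_ne_zero_iff.mpr hα)
  · have hsub := hker _ (monomial_sub_monomial_mem_ker heq h.symm)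
    rw [map_sub, hmon, hmon, sub_eq_zero] at hsub
    exact ⟨heq, hsub⟩

lemma exists_units_prod_pow_eq_of_ker_vanishing
    (hker : ∀ r ∈ RingHom.ker (tightAction ℂ hslow), aeval q r = 0) :
    ∃ x : σ → ℂˣ, ∀ v : NonzeroExponent f, q v ≠ 0 → (v.1.prod fun i k => (x i : ℂ) ^ k) = q v := by
  let extend (γ : {v : NonzeroExponent f // q v ≠ 0} →₀ ℕ) := γ.mapDomain Subtype.val
  have hextend (γ) (v : NonzeroExponent f) (hv : q v = 0) : extend γ v = 0 :=
    Finsupp.mapDomain_of_notMem_range _ _ fun ⟨u, hu⟩ => u.2 (hu ▸ hv)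
  have hprod (γ) : ((extend γ).prod fun v k => q v ^ k) =
      Units.val (γ.prod fun v k => Units.mk0 (q v) v.2 ^ k) := by
    rw [Finsupp.prod_mapDomain_index_inj Subtype.val_injective]
    simp [Finsupp.prod]
  have hlc (γ) : linearCombination ℕ Subtype.val (extend γ) =
      linearCombination ℕ (fun v : {v : NonzeroExponent f // q v ≠ 0} => v.1.1) γ :=
    Finsupp.linearCombination_mapDomain ..
  obtain ⟨x, hx⟩ := exists_units_prod_pow_eq
    (q := fun v : {v : NonzeroExponent f // q v ≠ 0} => Units.mk0 (q v) v.2) fun α β h => by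
      rw [← hlc, ← hlc] at h
      rw [Units.ext_iff, ← hprod, ← hprod]
      rcases le_total (extend α).degree (extend β).degree with hle | hle
      · exact (degree_eq_and_prod_eq_of_ker_vanishing hker (hextend β) h.symm hle).2
      · exact (degree_eq_and_prod_eq_of_ker_vanishing hker (hextend α) h hle).2.symm
  refine ⟨x, fun v hv => ?_⟩
  simpa [Finsupp.prod] using congrArg Units.val (hx ⟨v, hv⟩)

variable [Finite σ]

theorem eq_zero_of_ker_vanishing (hf : Nondegenerate f)
    (hker : ∀ r ∈ RingHom.ker (tightAction ℂ hslow), aeval q r = 0)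
    (hsymbol : ∀ i, aeval q (eulerSymbol f i) = 0) : q = 0 := by
  by_contra hq
  obtain ⟨v₀, hv₀⟩ := Function.ne_iff.mp hq
  obtain ⟨l, s, hs, hl⟩ := exists_functional_le_iff (p := Subtype.val) (T := {v | q v ≠ 0})
    fun α β hα hαβ hdeg => by
      simp only [Set.mem_ofPred_eq, not_not] at hα ⊢
      obtain ⟨heq, hprod⟩ := degree_eq_and_prod_eq_of_ker_vanishing hker hα hαβ hdeg
      exact ⟨heq, prod_pow_ne_zero_iff.mp (hprod ▸ prod_pow_ne_zero_iff.mpr hα)⟩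
  obtain ⟨x, hx⟩ := exists_units_prod_pow_eq_of_ker_vanishing hker
  refine hf _ (isNBFace_setOf_eq hs (fun v => (hl v).1) ((hl v₀).2.mpr hv₀))
    ⟨fun i => x i, fun i => (x i).ne_zero, fun i => ?_⟩
  classical
  rw [eval_faceRestrict_X_mul_pderiv]
  refine Eq.trans (Finset.sum_congr rfl fun v _ => ?_)
    ((aeval_eulerSymbol q i).symm.trans (hsymbol i))
  by_cases hv : q v = 0
  · rw [hv, mul_zero, if_neg fun h => (hl v).2.mp h.2 hv]
  · rw [if_pos ⟨toR_mem_newtonPolytope (Finset.mem_of_mem_erase v.2), (hl v).2.mpr hv⟩, hx v hv]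

/-- The Nullstellensatz form of nondegeneracy. -/
theorem exists_X_pow_mem (hf : Nondegenerate f)
    (hslow : ∀ a (v : NonzeroExponent f), deg (a + v.1) ≤ deg a + 1) :
    ∃ k : ℕ, k ≠ 0 ∧ ∀ v, X v ^ k ∈
      Ideal.span (Set.range (eulerSymbol f)) ⊔ RingHom.ker (tightAction ℂ hslow) := by
  set I := Ideal.span (Set.range (eulerSymbol f)) ⊔ RingHom.ker (tightAction ℂ hslow)
  have hrad (v : NonzeroExponent f) : X v ∈ I.radical := by
    rw [← vanishingIdeal_zeroLocus_eq_radical (K := ℂ), mem_vanishingIdeal_iff]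
    intro q hq
    rw [mem_zeroLocus_iff] at hq
    have hzero : q = 0 := eq_zero_of_ker_vanishing hf
      (fun r hr => hq r (Ideal.mem_sup_right hr))
      (fun i => hq _ (Ideal.mem_sup_left (Ideal.subset_span ⟨i, rfl⟩)))
    simp [hzero]
  choose m hm using hrad
  refine ⟨∑ v, m v + 1, Nat.succ_ne_zero _, fun v => Ideal.pow_mem_of_pow_mem _ (hm v) ?_⟩
  exact (Finset.single_le_sum (fun _ _ => Nat.zero_le _) (Finset.mem_univ v)).trans (Nat.le_succ _)

end EulerSymbol

section KoszulFiltration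

open Module

variable {I A K E W : Type*} [CommRing K] [AddCommGroup E] [Module K E]

section Basis

lemma finite_setOf_snd_mem [Finite I] {s : Set A} (hs : s.Finite) :
    {q : Σ _ : Finset I, A | q.2 ∈ s}.Finite :=
  ((Set.finite_univ.prod hs).preimage (Equiv.sigmaEquivProd _ _).injective.injOn).subset
    fun _ hq => ⟨Set.mem_univ _, hq⟩

variable [Fintype I]

/-- The basis `e_S ⊗ b_a` of the Koszul chains. -/
noncomputable def chainBasis (b : Basis A K E) : Basis (Σ _ : Finset I, A) K (Finset I → E) :=
  Pi.basis fun _ => b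

variable {b : Basis A K E}

lemma mem_spanOn_chainBasis_iff {Q : Set (Σ _ : Finset I, A)} {z : Finset I → E} :
    z ∈ spanOn (chainBasis b) Q ↔ ∀ S, z S ∈ spanOn b {a | ⟨S, a⟩ ∈ Q} := by
  simp [mem_spanOn_iff, chainBasis, Sigma.forall]

lemma chainsOn_eq_spanOn (b : Basis A K E) (s : Finset I) (m : ℕ) :
    chainsOn K E s m = spanOn (chainBasis b) {q | q.1 ⊆ s ∧ m ≤ q.1.card} := by
  ext z
  rw [mem_spanOn_iff]
  constructor
  · rintro hz ⟨S, a⟩ hne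
    exact hz S fun h => hne (by simp [chainBasis, h])
  · intro hz S hS
    obtain ⟨a, ha⟩ : ∃ a, b.repr (z S) a ≠ 0 := by
      by_contra! h
      exact hS (b.repr.map_eq_zero_iff.mp (Finsupp.ext h))
    exact hz ⟨S, a⟩ ha

end Basis

variable [DecidableEq I]

lemma compLeft_single (g : End K E) (S : Finset I) (e : E) :
    g.compLeft (Finset I) (Pi.single S e) = Pi.single S (g e) :=
  funext fun T => Pi.apply_single (fun _ => g) (fun _ => map_zero g) S e T

lemma contract_single (i : I) (S : Finset I) (e : E) :
    contract K E i (Pi.single S e) =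
      if i ∈ S then koszulSign i (S.erase i) • Pi.single (S.erase i) e else 0 := by
  ext1 T
  by_cases hT : i ∈ T
  · have hne : T ≠ S.erase i := by rintro rfl; simp at hT
    by_cases hi : i ∈ S <;> simp [contract_apply, hT, hi, hne]
  · by_cases hi : i ∈ S
    · rcases eq_or_ne T (S.erase i) with rfl | hne
      · simp [contract_apply, hi, Finset.insert_erase]
      · have hne' : insert i T ≠ S := by rintro rfl; simp [hT] at hne
        simp [contract_apply, hT, hi, hne, hne']
    · have hne : insert i T ≠ S := by rintro rfl; simp at hi
      simp [contract_apply, hT, hi, hne]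

lemma contract_mul_wedge_single (i : I) (S : Finset I) (e : E) :
    (contract K E i * wedge K E i) (Pi.single S e) = if i ∈ S then 0 else Pi.single S e := by
  ext1 T
  rw [contract_mul_wedge_apply]
  rcases eq_or_ne T S with rfl | hne
  · split_ifs <;> simp
  · split_ifs <;> simp [hne]

lemma wedge_mul_contract_single (i : I) (S : Finset I) (e : E) :
    (wedge K E i * contract K E i) (Pi.single S e) = if i ∈ S then Pi.single S e else 0 := by
  ext1 T
  rw [wedge_mul_contract_apply]
  rcases eq_or_ne T S with rfl | hne
  · split_ifs <;> simp
  · split_ifs <;> simp [hne]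

variable [Fintype I]

lemma koszul_single (x : I → End K E) (S : Finset I) (e : E) :
    koszul x (Pi.single S e) =
      ∑ i ∈ S, koszulSign i (S.erase i) • Pi.single (S.erase i) (x i e) := by
  simp only [koszul, LinearMap.sum_apply, Module.End.mul_apply, contract_single, apply_ite,
    map_zero, Finset.sum_ite_mem, Finset.univ_inter]
  exact Finset.sum_congr rfl fun i _ => by
    rw [Units.smul_def, map_zsmul, compLeft_single]; rfl

lemma koszul_sub (x x' : I → End K E) : koszul x - koszul x' = koszul fun i => x i - x' i := by
  refine LinearMap.ext fun z => funext fun S => ?_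
  rw [LinearMap.sub_apply, Pi.sub_apply, koszul_apply, koszul_apply, koszul_apply,
    ← Finset.sum_sub_distrib]
  exact Finset.sum_congr rfl fun i _ => by split_ifs <;> simp [smul_sub]

lemma koszul_mem_chainsOn (x : I → End K E) {s : Finset I} {m : ℕ} {z : Finset I → E}
    (hz : z ∈ chainsOn K E s (m + 1)) : koszul x z ∈ chainsOn K E s m := by
  rw [koszul, LinearMap.sum_apply]
  refine Submodule.sum_mem _ fun i _ => compLeft_mem_chainsOn _ ?_
  by_cases hi : i ∈ s
  · exact contract_mem_chainsOn (by rwa [Finset.insert_eq_of_mem hi])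
  · rw [contract_eq_zero_of_notMem hi hz]
    exact Submodule.zero_mem _

lemma KoszulExact.congr {x x' : I → End K E} {s : Finset I} {m : ℕ} (h : ∀ i ∈ s, x i = x' i)
    (hex : KoszulExact x s m) : KoszulExact x' s m := by
  have heq {k : ℕ} {z : Finset I → E} (hz : z ∈ chainsOn K E s k) : koszul x z = koszul x' z := by
    simp only [koszul, LinearMap.sum_apply, Module.End.mul_apply]
    refine Finset.sum_congr rfl fun i _ => ?_
    by_cases hi : i ∈ s
    · rw [h i hi]
    · rw [contract_eq_zero_of_notMem hi hz, map_zero, map_zero]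
  intro z hz hDz
  obtain ⟨y, hy, rfl⟩ := hex z hz (by rwa [heq hz])
  exact ⟨y, hy, (heq hy).symm⟩

variable {b : Basis A K E}

lemma chainBasis_apply (q : Σ _ : Finset I, A) : chainBasis b q = Pi.single q.1 (b q.2) :=
  Pi.basis_apply ..

lemma single_mem_spanOn {Q : Set (Σ _ : Finset I, A)} {S : Finset I} {e : E}
    (he : e ∈ spanOn b {a | ⟨S, a⟩ ∈ Q}) : Pi.single S e ∈ spanOn (chainBasis b) Q := by
  refine mem_spanOn_chainBasis_iff.mpr fun T => ?_
  rcases eq_or_ne T S with rfl | hne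
  · simpa using he
  · simp [hne]

lemma koszul_basis_mem {x : I → End K E} {S : Finset I} {a : A} {Q : Set (Σ _ : Finset I, A)}
    (h : ∀ i ∈ S, x i (b a) ∈ spanOn b {a' | ⟨S.erase i, a'⟩ ∈ Q}) :
    koszul x (chainBasis b ⟨S, a⟩) ∈ spanOn (chainBasis b) Q := by
  rw [chainBasis_apply, koszul_single]
  refine Submodule.sum_mem _ fun i hi => ?_
  rw [Units.smul_def]
  exact zsmul_mem (single_mem_spanOn (h i hi)) _

variable [LinearOrder W]

lemma isLeadingPart_koszul {x₀ x : I → End K E} {wt : (Σ _ : Finset I, A) → W}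
    (h₀ : ∀ S, ∀ i ∈ S, ∀ a, x₀ i (b a) ∈ spanOn b {a' | wt ⟨S.erase i, a'⟩ = wt ⟨S, a⟩})
    (h : ∀ S, ∀ i ∈ S, ∀ a,
      (x i - x₀ i) (b a) ∈ spanOn b {a' | wt ⟨S.erase i, a'⟩ < wt ⟨S, a⟩}) :
    IsLeadingPart (chainBasis b) wt (koszul x₀) (koszul x) where
  homogeneous q := koszul_basis_mem fun i hi => h₀ q.1 i hi q.2
  lowers q := by
    rw [koszul_sub]
    exact koszul_basis_mem fun i hi => h q.1 i hi q.2

theorem KoszulExact.of_leadingPart {x₀ x : I → End K E} {wt : (Σ _ : Finset I, A) → W}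
    (h : IsLeadingPart (chainBasis b) wt (koszul x₀) (koszul x))
    (hwf : WellFounded (InvImage (· < ·) wt)) (hx : Pairwise fun i j => Commute (x i) (x j))
    {s : Finset I} {m : ℕ} (hex : KoszulExact x₀ s m) {L : Set W} (hL : IsLowerSet L)
    {z : Finset I → E} (hz : z ∈ chainsOn K E s m)
    (hDz : koszul x z ∈ spanOn (chainBasis b) (wt ⁻¹' L)) :
    ∃ y ∈ chainsOn K E s (m + 1), z - koszul x y ∈ spanOn (chainBasis b) (wt ⁻¹' L) := by
  have hQ : ∀ q ∈ {q : Σ _ : Finset I, A | q.1 ⊆ s ∧ m + 1 ≤ q.1.card},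
      koszul x (chainBasis b q) ∈ spanOn (chainBasis b) {q | q.1 ⊆ s ∧ m ≤ q.1.card} := by
    intro q hq
    rw [← chainsOn_eq_spanOn]
    exact koszul_mem_chainsOn x (chainsOn_eq_spanOn b s (m + 1) ▸ basis_mem_spanOn hq)
  rw [chainsOn_eq_spanOn b] at hz ⊢
  rw [KoszulExact, chainsOn_eq_spanOn b, chainsOn_eq_spanOn b] at hex
  exact h.exact hwf (koszul_koszul hx) hQ hex hL hz hDz

lemma wellFounded_invImage_lt {X : Type*} {wt : X → W} (h : ∀ x, {y | wt y ≤ wt x}.Finite) :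
    WellFounded (InvImage (· < ·) wt) := by
  refine WellFounded.wellFounded_iff_has_min.mpr fun s ⟨x, hx⟩ => ?_
  obtain ⟨y, ⟨hy, hyx⟩, hmin⟩ := Set.exists_min_image {y ∈ s | wt y ≤ wt x} wt
    ((h x).subset fun y hy => hy.2) ⟨x, hx, le_rfl⟩
  exact ⟨y, hy, fun z hz hzy => (hmin z ⟨hz, hzy.le.trans hyx⟩).not_gt hzy⟩

lemma koszul_single_singleton (x : I → End K E) (i : I) (e : E) :
    koszul x (Pi.single {i} e) = Pi.single ∅ (x i e) := by
  simp [koszul_single, koszulSign]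

lemma koszul_apply_empty (x : I → End K E) {s : Finset I} {m : ℕ} {z : Finset I → E}
    (hz : z ∈ chainsOn K E s m) : koszul x z ∅ = ∑ i ∈ s, x i (z {i}) := by
  have hzero (i : I) (hi : i ∉ s) : z {i} = 0 :=
    by_contra fun h => hi (Finset.singleton_subset_iff.mp (hz _ h).1)
  rw [koszul_apply, ← Finset.sum_subset s.subset_univ fun i _ hi => by simp [hzero i hi]]
  simp [koszulSign]

section StrictCombination

variable {x₀ x : I → End K E} {deg : A → ℝ}

lemma isLeadingPart_koszul_deg_add_card
    (h₀ : ∀ i a, x₀ i (b a) ∈ spanOn b {a' | deg a' = deg a + 1})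
    (hlow : ∀ i a, (x i - x₀ i) (b a) ∈ spanOn b {a' | deg a' < deg a + 1}) :
    IsLeadingPart (chainBasis b) (fun q => deg q.2 + q.1.card) (koszul x₀) (koszul x) := by
  have hcard {S : Finset I} {i : I} (hi : i ∈ S) : (S.card : ℝ) = (S.erase i).card + 1 := by
    rw [← Finset.card_erase_add_one hi, Nat.cast_succ]
  refine isLeadingPart_koszul (fun S i hi a => spanOn_mono (fun a' ha' => ?_) (h₀ i a))
    (fun S i hi a => spanOn_mono (fun a' ha' => ?_) (hlow i a)) <;>
  · simp only [Set.mem_ofPred_eq, hcard hi] at ha' ⊢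
    linarith

/-- Exactness in exterior degrees `≥ 1` of the leading parts makes the filtration strict on the
combinations `∑ x_i h_i`: cancelling leading terms come from a Koszul boundary, which can be
subtracted from `h`. -/
theorem KoszulExact.exists_sum_eq (hfin : ∀ r, {a | deg a ≤ r}.Finite)
    (h₀ : ∀ i a, x₀ i (b a) ∈ spanOn b {a' | deg a' = deg a + 1})
    (hlow : ∀ i a, (x i - x₀ i) (b a) ∈ spanOn b {a' | deg a' < deg a + 1})
    (hx : Pairwise fun i j => Commute (x i) (x j)) {s : Finset I} (hex : KoszulExact x₀ s 1)
    {h : I → E} {r : ℝ} (hg : ∑ i ∈ s, x i (h i) ∈ spanOn b {a | deg a ≤ r + 1}) :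
    ∃ h' : I → E, (∀ i, h' i ∈ spanOn b {a | deg a ≤ r}) ∧
      ∑ i ∈ s, x i (h' i) = ∑ i ∈ s, x i (h i) := by
  let wt (q : Σ _ : Finset I, A) : ℝ := deg q.2 + q.1.card
  have hwf : WellFounded (InvImage (· < ·) wt) := wellFounded_invImage_lt fun q₀ =>
    (finite_setOf_snd_mem (hfin (wt q₀))).subset fun q hq =>
      show deg q.2 ≤ wt q₀ from le_trans (le_add_of_nonneg_right q.1.card.cast_nonneg) hq
  let z : Finset I → E := ∑ i ∈ s, Pi.single {i} (h i)
  have hz : z ∈ chainsOn K E s 1 := Submodule.sum_mem _ fun i hi S hS => by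
    obtain rfl : S = {i} := by_contra fun hne => hS (by simp [hne])
    simp [hi]
  have hDz : koszul x z = Pi.single ∅ (∑ i ∈ s, x i (h i)) := by
    simp only [z, map_sum, koszul_single_singleton]
    exact (map_sum (LinearMap.single K _ ∅) _ _).symm
  obtain ⟨y, hy, hzy⟩ := hex.of_leadingPart (isLeadingPart_koszul_deg_add_card h₀ hlow) hwf hx
    (isLowerSet_Iic (r + 1)) hz (by
      rw [hDz]
      exact single_mem_spanOn (spanOn_mono (fun a ha => by simpa [wt] using ha) hg))
  refine ⟨(z - koszul x y) ∘ singleton, fun i => spanOn_mono (fun a ha => ?_)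
    (mem_spanOn_chainBasis_iff.mp hzy {i}), ?_⟩
  · simpa [wt] using ha
  · calc ∑ i ∈ s, x i ((z - koszul x y) {i}) = koszul x (z - koszul x y) ∅ :=
          (koszul_apply_empty x (sub_mem hz (koszul_mem_chainsOn x hy))).symm
      _ = ∑ i ∈ s, x i (h i) := by
          rw [map_sub, koszul_koszul hx, sub_zero, hDz, Pi.single_eq_same]

end StrictCombination

end KoszulFiltration

section Homotopy

open Module

variable {X ι K M : Type*} [CommRing K] [AddCommGroup M] [Module K M] {b : Basis X K M}

open Classical in
/-- Each homotopy `H u` splits off the part of a cycle lying in `B u`. -/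
lemma exists_map_eq_of_homotopy {D : End K M} {H : ι → End K M} {B : ι → Set X} {P Q : Set X}
    (hDD : ∀ z, D (D z) = 0)
    (hH : ∀ u x, D (H u (b x)) + H u (D (b x)) = if x ∈ B u then b x else 0)
    (hQ : ∀ u, ∀ z ∈ spanOn b P, H u z ∈ spanOn b Q) (s : Finset ι) {z : M}
    (hz : z ∈ spanOn b {x ∈ P | ∃ u ∈ s, x ∈ B u}) (hDz : D z = 0) :
    ∃ y ∈ spanOn b Q, D y = z := by
  induction s using Finset.induction_on generalizing z with
  | empty =>
    refine ⟨0, Submodule.zero_mem _, ?_⟩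
    simpa [spanOn, eq_comm] using hz
  | insert u s hu ih =>
    have hrest : z - D (H u z) ∈ spanOn b {x ∈ P | ∃ u' ∈ s, x ∈ B u'} := by
      have := map_mem_of_mem_spanOn (D := LinearMap.id - (D * H u + H u * D))
        (V := spanOn b {x ∈ P | ∃ u' ∈ s, x ∈ B u'}) (fun x hx => ?_) hz
      · simpa [hDz] using this
      simp only [LinearMap.sub_apply, LinearMap.id_apply, LinearMap.add_apply,
        Module.End.mul_apply, hH]
      obtain ⟨hxP, u', hu', hx⟩ := hx
      split_ifs with hxu
      · simp
      · rcases Finset.mem_insert.mp hu' with rfl | hu's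
        · exact absurd hx hxu
        · rw [sub_zero]
          exact basis_mem_spanOn ⟨hxP, u', hu's, hx⟩
    obtain ⟨y, hy, hDy⟩ := ih hrest (by rw [map_sub, hDD, hDz, sub_zero])
    have hHz := hQ u z (spanOn_mono (Set.sep_subset _ _) hz)
    exact ⟨y + H u z, add_mem hy hHz, by rw [map_add, hDy, sub_add_cancel]⟩

end Homotopy

section GenericKoszul

lemma toLeft_erase_inr {α β : Type*} [DecidableEq α] [DecidableEq β] (S : Finset (α ⊕ β)) (b : β) :
    (S.erase (.inr b)).toLeft = S.toLeft := by
  ext; simp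

variable {σ ι K : Type*} [Fintype σ] [Fintype ι] [LinearOrder ι] [CommRing K]
  {p : ι → σ →₀ ℕ} (W : GenericShift p) (k : ℕ)

namespace GenericShift

variable (K) in
/-- Multiplication by `u ^ (k p_v)` on the monomials whose `v`-th coordinate is positive, zero on
the other monomials. -/
noncomputable def leadMul (v : ι) : Module.End K (MvPolynomial σ K) :=
  (basisMonomials σ K).constr K fun a =>
    if 0 < W.coord a v then monomial (a + k • p v) 1 else 0

variable (K) in
/-- Division by `u ^ (k p_v)` on the monomials whose `v`-th coordinate exceeds `k`, zero on the
other monomials. -/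
noncomputable def leadDiv (v : ι) : Module.End K (MvPolynomial σ K) :=
  (basisMonomials σ K).constr K fun a =>
    if k < W.coord a v then monomial (a - k • p v) 1 else 0

lemma leadMul_monomial (v : ι) (a : σ →₀ ℕ) : W.leadMul K k v (monomial a 1) =
    if 0 < W.coord a v then monomial (a + k • p v) 1 else 0 :=
  (basisMonomials σ K).constr_basis K _ a

lemma leadDiv_monomial (v : ι) (a : σ →₀ ℕ) : W.leadDiv K k v (monomial a 1) =
    if k < W.coord a v then monomial (a - k • p v) 1 else 0 :=
  (basisMonomials σ K).constr_basis K _ a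

variable {W k} {u v : ι}

lemma commute_leadMul (huv : u ≠ v) : Commute (W.leadMul K k u) (W.leadMul K k v) := by
  refine (basisMonomials σ K).ext fun a => ?_
  by_cases hu : 0 < W.coord a u <;> by_cases hv : 0 < W.coord a v <;>
    simp [leadMul_monomial, hu, hv, coord_add_of_pos, huv, huv.symm, add_right_comm]

lemma commute_leadDiv_leadMul (huv : u ≠ v) : Commute (W.leadDiv K k u) (W.leadMul K k v) := by
  refine (basisMonomials σ K).ext fun a => ?_
  by_cases hu : k < W.coord a u
  · obtain ⟨a, rfl, hcoord⟩ := exists_eq_add_of_lt_coord hu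
    have ha : 0 < W.coord a u := by simpa [hcoord] using hu
    by_cases hv : 0 < W.coord a v
    · simp [leadMul_monomial, leadDiv_monomial, ha, hv, hcoord, coord_add_of_pos, huv, huv.symm,
        add_right_comm _ (k • p u)]
    · simp [leadMul_monomial, leadDiv_monomial, ha, hv, hcoord, huv.symm]
  · by_cases hv : 0 < W.coord a v <;>
      simp [leadMul_monomial, leadDiv_monomial, hu, hv, coord_add_of_pos, huv]

lemma leadMul_leadDiv (u : ι) (a : σ →₀ ℕ) : W.leadMul K k u (W.leadDiv K k u (monomial a 1)) =
    if k < W.coord a u then monomial a 1 else 0 := by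
  rw [leadDiv_monomial]
  split_ifs with hu
  · obtain ⟨a, rfl, hcoord⟩ := exists_eq_add_of_lt_coord hu
    have ha : 0 < W.coord a u := by simpa [hcoord] using hu
    rw [add_tsub_cancel_right, leadMul_monomial, if_pos ha]
  · exact map_zero _

lemma leadDiv_leadMul (u : ι) (a : σ →₀ ℕ) : W.leadDiv K k u (W.leadMul K k u (monomial a 1)) =
    if 0 < W.coord a u then monomial a 1 else 0 := by
  rw [leadMul_monomial]
  split_ifs with hu
  · have hlt : k < W.coord (a + k • p u) u := by simpa [coord_add_of_pos hu] using hu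
    rw [leadDiv_monomial, if_pos hlt, add_tsub_cancel_right]
  · exact map_zero _

lemma pairwise_commute_leadMul :
    Pairwise fun i j => Commute (Sum.elim (0 : σ → Module.End K (MvPolynomial σ K))
      (W.leadMul K k) i) (Sum.elim 0 (W.leadMul K k) j)
  | .inr _, .inr _, huv => commute_leadMul fun h => huv (congrArg _ h)
  | .inl _, _, _ => Commute.zero_left _
  | _, .inl _, _ => Commute.zero_right _

lemma commute_tightAction (P Q : MvPolynomial ι K) :
    Commute (tightAction K W.deg_add_le P) (tightAction K W.deg_add_le Q) :=
  (Commute.all P Q).map _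

lemma isTight_single_of_pos (hv : 0 < W.coord a v) : IsTight p W.deg (.single v k) a := by
  simp [IsTight, deg, coord_add_of_pos hv, Finset.sum_add_distrib]

/-- `X_v ^ k` and its leading part differ only where `u ^ (k p_v)` lowers the lexicographic
key. -/
lemma tightAction_X_pow_sub_leadMul_mem (v : ι) (a : σ →₀ ℕ) :
    (tightAction K W.deg_add_le (X v ^ k) - W.leadMul K k v) (monomial a 1) ∈
      spanOn (basisMonomials σ K) {a' | a' = a + k • p v ∧ W.coord a v = 0} := by
  rw [X_pow_eq_monomial, tightAction_monomial, one_smul, LinearMap.sub_apply, leadMul_monomial]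
  rcases (coord_nonneg (W := W) (a := a) v).eq_or_lt' with hv | hv
  · rw [if_neg hv.not_gt, sub_zero]
    by_cases ht : IsTight p W.deg (.single v k) a
    · rw [tightShift_monomial_of_isTight ht, Finsupp.linearCombination_single]
      exact basis_mem_spanOn (b := basisMonomials σ K)
        (P := {a' | a' = a + k • p v ∧ W.coord a v = 0}) ⟨rfl, hv⟩
    · rw [tightShift_monomial_of_not_isTight ht]
      exact Submodule.zero_mem _
  · rw [if_pos hv, tightShift_monomial_of_isTight (isTight_single_of_pos hv),
      Finsupp.linearCombination_single, sub_self]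
    exact Submodule.zero_mem _

variable [DecidableEq σ]

variable (W k) in
/-- The coordinates of the chain `e_S ⊗ u ^ a`, where `e_v` counts as the factor `u ^ (k p_v)` by
which the differential replaces it. -/
noncomputable def chainCoord (q : Σ _ : Finset (σ ⊕ ι), σ →₀ ℕ) : ι → ℝ :=
  W.coord q.2 + fun v => if .inr v ∈ q.1 then (k : ℝ) else 0

lemma chainCoord_of_mem {S : Finset (σ ⊕ ι)} (hv : .inr v ∈ S) (a : σ →₀ ℕ) :
    W.chainCoord k ⟨S, a⟩ v = W.coord a v + k := by
  simp [chainCoord, hv]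

lemma chainCoord_of_notMem {S : Finset (σ ⊕ ι)} (hv : .inr v ∉ S) (a : σ →₀ ℕ) :
    W.chainCoord k ⟨S, a⟩ v = W.coord a v := by
  simp [chainCoord, hv]

lemma chainCoord_eq_erase_inr {S : Finset (σ ⊕ ι)} (hv : .inr v ∈ S) (a : σ →₀ ℕ) :
    W.chainCoord k ⟨S, a⟩ = W.coord a + Pi.single v (k : ℝ) +
      fun u => if .inr u ∈ S.erase (.inr v) then (k : ℝ) else 0 := by
  ext u
  rcases eq_or_ne u v with rfl | huv
  · simp [chainCoord, hv]
  · simp [chainCoord, huv]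

lemma koszul_leadMul_homotopy (u : ι) (q : Σ _ : Finset (σ ⊕ ι), σ →₀ ℕ) :
    let D := koszul (Sum.elim 0 (W.leadMul K k))
    let H := (W.leadDiv K k u).compLeft (Finset (σ ⊕ ι)) * wedge K _ (.inr u)
    D (H (chainBasis (basisMonomials σ K) q)) + H (D (chainBasis (basisMonomials σ K) q)) =
      if k < W.chainCoord k q u then chainBasis (basisMonomials σ K) q else 0 := by
  intro D H
  obtain ⟨S, a⟩ := q
  have hDH := koszul_mul_wedge (x := Sum.elim (0 : σ → Module.End K (MvPolynomial σ K))
    (W.leadMul K k)) (G := W.leadDiv K k u) (v := .inr u) fun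
    | .inl _, _ => Commute.zero_right _
    | .inr v, hv => commute_leadDiv_leadMul fun h => hv (congrArg _ h.symm)
  refine (LinearMap.congr_fun hDH _).trans ?_
  rw [chainBasis_apply, coe_basisMonomials, LinearMap.add_apply, Module.End.mul_apply,
    Module.End.mul_apply (LinearMap.compLeft _ _), contract_mul_wedge_single,
    wedge_mul_contract_single]
  by_cases hu : .inr u ∈ S
  · simp [hu, chainCoord_of_mem, compLeft_single, leadDiv_leadMul, apply_ite (Pi.single S)]
  · simp [hu, chainCoord_of_notMem, compLeft_single, leadMul_leadDiv, apply_ite (Pi.single S)]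

lemma exists_lt_chainCoord {S : Finset (σ ⊕ ι)} (hS : Fintype.card ι + 1 ≤ S.card) (a : σ →₀ ℕ) :
    ∃ v, k < W.chainCoord k ⟨S, a⟩ v := by
  suffices (S.toRight ∩ ({v | W.coord a v ≠ 0} : Finset ι)).Nonempty by
    obtain ⟨v, hv⟩ := this
    rw [Finset.mem_inter, Finset.mem_toRight, Finset.mem_filter_univ] at hv
    refine ⟨v, ?_⟩
    simpa [chainCoord_of_mem hv.1] using (coord_nonneg v).lt_of_ne' hv.2
  refine Finset.inter_nonempty_of_card_lt_card_add_card (Finset.subset_univ _)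
    (Finset.subset_univ _) ?_
  have := S.card_toLeft_add_card_toRight
  have := S.toLeft.card_le_univ
  rw [W.card_support_coord, Finset.card_univ]
  lia

theorem koszulExact_leadMul :
    KoszulExact (Sum.elim 0 (W.leadMul K k)) (.univ : Finset (σ ⊕ ι)) (Fintype.card ι + 1) := by
  intro z hz hDz
  let P : Set (Σ _ : Finset (σ ⊕ ι), σ →₀ ℕ) := {q | q.1 ⊆ .univ ∧ Fintype.card ι + 1 ≤ q.1.card}
  let B (u : ι) : Set (Σ _ : Finset (σ ⊕ ι), σ →₀ ℕ) := {q | k < W.chainCoord k q u}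
  rw [chainsOn_eq_spanOn (basisMonomials σ K)] at hz ⊢
  have hcover : P ⊆ {q ∈ P | ∃ u ∈ Finset.univ, q ∈ B u} := fun q hq =>
    ⟨hq, by simpa [B] using exists_lt_chainCoord hq.2 q.2⟩
  refine exists_map_eq_of_homotopy (B := B) (koszul_koszul pairwise_commute_leadMul)
    koszul_leadMul_homotopy (fun u w hw => ?_) .univ (spanOn_mono hcover hz) hDz
  rw [← chainsOn_eq_spanOn] at hw ⊢
  rw [Module.End.mul_apply]
  exact compLeft_mem_chainsOn _ (wedge_mem_chainsOn (Finset.mem_univ _) hw)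

variable (W k) in
/-- The weight for which `leadMul` is the leading part of the action of the `X_v ^ k`. -/
noncomputable def chainWeight (q : Σ _ : Finset (σ ⊕ ι), σ →₀ ℕ) : ℕ ×ₗ ℝ ×ₗ Lex (ι → ℝ) :=
  toLex (q.1.toLeft.card, lexKey (W.chainCoord k q))

lemma chainWeight_erase_inl_lt {i : σ} {S : Finset (σ ⊕ ι)} (hi : .inl i ∈ S) (a a' : σ →₀ ℕ) :
    W.chainWeight k ⟨S.erase (.inl i), a'⟩ < W.chainWeight k ⟨S, a⟩ := by
  refine Prod.Lex.toLex_lt_toLex.mpr (.inl (Finset.card_lt_card ?_))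
  have herase : (S.erase (.inl i)).toLeft = S.toLeft.erase i := by ext; simp
  rw [herase]
  exact Finset.erase_ssubset (Finset.mem_toLeft.mpr hi)

lemma chainWeight_erase_inr_of_pos {S : Finset (σ ⊕ ι)} (hvS : .inr v ∈ S)
    (hv : 0 < W.coord a v) :
    W.chainWeight k ⟨S.erase (.inr v), a + k • p v⟩ = W.chainWeight k ⟨S, a⟩ := by
  rw [chainWeight, chainWeight, chainCoord_eq_erase_inr hvS, ← coord_add_of_pos hv,
    toLeft_erase_inr]
  rfl

lemma chainWeight_erase_inr_lt (hk : k ≠ 0) {S : Finset (σ ⊕ ι)} (hvS : .inr v ∈ S)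
    (hv : W.coord a v = 0) :
    W.chainWeight k ⟨S.erase (.inr v), a + k • p v⟩ < W.chainWeight k ⟨S, a⟩ := by
  refine Prod.Lex.toLex_lt_toLex.mpr (.inr ⟨congrArg Finset.card (toLeft_erase_inr S v), ?_⟩)
  rw [chainCoord_eq_erase_inr hvS, chainCoord, map_add, map_add _ (_ + _)]
  exact add_lt_add_left (lexKey_coord_add_lt hv hk) _

lemma deg_le_sum_chainCoord (q : Σ _ : Finset (σ ⊕ ι), σ →₀ ℕ) :
    W.deg q.2 ≤ ∑ v, W.chainCoord k q v :=
  Finset.sum_le_sum fun v _ => le_add_of_nonneg_right (by dsimp only; positivity)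

lemma wellFounded_chainWeight : WellFounded (InvImage (· < ·) (W.chainWeight k)) := by
  have hwf : WellFounded (InvImage (· < ·) fun q => lexKey (W.chainCoord k q)) :=
    wellFounded_invImage_lt fun q₀ =>
      (finite_setOf_snd_mem (W.finite_setOf_deg_le (∑ v, W.chainCoord k q₀ v))).subset fun q hq =>
        (deg_le_sum_chainCoord q).trans (sum_le_of_lexKey_le hq)
  refine Subrelation.wf (fun h => ?_)
    (InvImage.wf (fun q => (q.1.toLeft.card, q)) (wellFounded_lt.prod_lex hwf))
  exact Prod.lex_def.mpr (Prod.Lex.toLex_lt_toLex.mp h)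

lemma isLeadingPart_leadMul (hk : k ≠ 0) (F : σ → MvPolynomial ι K) :
    IsLeadingPart (chainBasis (basisMonomials σ K)) (W.chainWeight k)
      (koszul (Sum.elim 0 (W.leadMul K k)))
      (koszul fun i => tightAction K W.deg_add_le (Sum.elim F (X · ^ k) i)) := by
  refine isLeadingPart_koszul (fun S => ?_) fun S => ?_
  · rintro (i | v) hi a
    · exact Submodule.zero_mem _
    · rw [coe_basisMonomials, Sum.elim_inr, leadMul_monomial]
      split_ifs with hv
      · exact basis_mem_spanOn (b := basisMonomials σ K) (chainWeight_erase_inr_of_pos hi hv)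
      · exact Submodule.zero_mem _
  · rintro (i | v) hi a
    · exact mem_spanOn_iff.mpr fun a' _ => chainWeight_erase_inl_lt hi a a'
    · refine spanOn_mono ?_ (tightAction_X_pow_sub_leadMul_mem v a)
      rintro _ ⟨rfl, hv⟩
      exact chainWeight_erase_inr_lt hk hi hv

lemma koszulExact_tightAction_univ (hk : k ≠ 0) (F : σ → MvPolynomial ι K) :
    KoszulExact (fun i => tightAction K W.deg_add_le (Sum.elim F (X · ^ k) i)) .univ
      (Fintype.card ι + 1) := by
  intro z hz hDz
  obtain ⟨y, hy, hzy⟩ := koszulExact_leadMul.of_leadingPart (isLeadingPart_leadMul hk F)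
    wellFounded_chainWeight (fun _ _ _ => commute_tightAction _ _) isLowerSet_empty hz
    (by rw [hDz]; exact Submodule.zero_mem _)
  refine ⟨y, hy, (sub_eq_zero.mp ?_).symm⟩
  simpa [spanOn] using hzy

/-- The zero operators indexed by `ι` only pad `F` to the index type `σ ⊕ ι`, in which the
`X_v ^ k` were adjoined. -/
theorem koszulExact_tightAction (hk : k ≠ 0) {F : σ → MvPolynomial ι K}
    (hF : ∀ v, X v ^ k ∈ Ideal.span (Set.range F) ⊔ RingHom.ker (tightAction K W.deg_add_le)) :
    KoszulExact (Sum.elim (fun i => tightAction K W.deg_add_le (F i)) (0 : ι → Module.End K _))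
      (Finset.univ.map .inl) 1 := by
  have hex := koszulExact_tightAction_univ (W := W) hk F
  have huniv : (Finset.univ : Finset (σ ⊕ ι)) = Finset.univ.map .inl ∪ Finset.univ.map .inr := by
    ext (i | v) <;> simp
  rw [huniv, add_comm, ← Finset.card_univ, ← Finset.card_map .inr] at hex
  refine (hex.of_union (Finset.disjoint_map_inl_map_inr _ _) ?_).congr ?_
  · intro v hv
    obtain ⟨v, -, rfl⟩ := Finset.mem_map.mp hv
    obtain ⟨y, hy, r, hr, hyr⟩ := Submodule.mem_sup.mp (hF v)
    obtain ⟨c, rfl⟩ := Ideal.mem_span_range_iff_exists_fun.mp hy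
    refine ⟨Sum.elim (fun i => tightAction K W.deg_add_le (c i)) 0, ?_, ?_⟩
    · rintro (i | _) j
      exacts [commute_tightAction _ _, Commute.zero_left _]
    · simp [← hyr, RingHom.mem_ker.mp hr]
  · simp

end GenericShift
end GenericKoszul

section Strictness

open Module
open Finsupp (linearCombination)

variable {σ ι K : Type*} [CommRing K] {p : ι → σ →₀ ℕ} {deg : (σ →₀ ℕ) → ℝ}

lemma tightShift_monomial_mem_spanOn (α : ι →₀ ℕ) (a : σ →₀ ℕ) :
    tightShift K p deg α (monomial a 1) ∈
      spanOn (basisMonomials σ K) {a' | deg a' = deg a + α.degree} := by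
  by_cases h : IsTight p deg α a
  · rw [tightShift_monomial_of_isTight h]
    exact basis_mem_spanOn (b := basisMonomials σ K) (P := {a' | deg a' = deg a + α.degree}) h
  · rw [tightShift_monomial_of_not_isTight h]
    exact Submodule.zero_mem _

lemma monomial_sub_tightShift_monomial_mem_spanOn (hslow : ∀ a v, deg (a + p v) ≤ deg a + 1)
    (α : ι →₀ ℕ) (a : σ →₀ ℕ) :
    monomial (a + linearCombination ℕ p α) 1 - tightShift K p deg α (monomial a 1) ∈
      spanOn (basisMonomials σ K) {a' | deg a' < deg a + α.degree} := by
  by_cases h : IsTight p deg α a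
  · rw [tightShift_monomial_of_isTight h, sub_self]
    exact Submodule.zero_mem _
  · rw [tightShift_monomial_of_not_isTight h, sub_zero]
    exact basis_mem_spanOn (b := basisMonomials σ K) (P := {a' | deg a' < deg a + α.degree})
      ((deg_add_linearCombination_le hslow a α).lt_of_ne h)

variable [DecidableEq σ] {f : MvPolynomial σ ℂ}
  {hslow : ∀ a (v : NonzeroExponent f), deg (a + v.1) ≤ deg a + 1}

lemma tightAction_eulerSymbol_monomial (i : σ) (a : σ →₀ ℕ) :
    tightAction ℂ hslow (eulerSymbol f i) (monomial a 1) = ∑ v : NonzeroExponent f,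
      (v.1 i * f.coeff v.1) • tightShift ℂ Subtype.val deg (.single v 1) (monomial a 1) := by
  simp only [eulerSymbol, map_sum, tightAction_monomial, LinearMap.sum_apply, LinearMap.smul_apply]

lemma tightAction_eulerSymbol_monomial_mem (i : σ) (a : σ →₀ ℕ) :
    tightAction ℂ hslow (eulerSymbol f i) (monomial a 1) ∈
      spanOn (basisMonomials σ ℂ) {a' | deg a' = deg a + 1} := by
  rw [tightAction_eulerSymbol_monomial]
  refine Submodule.sum_mem _ fun v _ => Submodule.smul_mem _ _ ?_
  simpa using tightShift_monomial_mem_spanOn (deg := deg) (K := ℂ) (p := Subtype.val)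
    (.single v 1) a

lemma mulLeft_sub_tightAction_eulerSymbol_monomial_mem (i : σ) (a : σ →₀ ℕ) :
    ((LinearMap.mulLeft ℂ (X i * pderiv i f) - tightAction ℂ hslow (eulerSymbol f i) :
      End ℂ (MvPolynomial σ ℂ)) (monomial a 1)) ∈
        spanOn (basisMonomials σ ℂ) {a' | deg a' < deg a + 1} := by
  rw [LinearMap.sub_apply, tightAction_eulerSymbol_monomial, LinearMap.mulLeft_apply,
    X_mul_pderiv_eq_sum, Finset.sum_mul, ← Finset.sum_sub_distrib]
  refine Submodule.sum_mem _ fun v _ => ?_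
  have hmul : monomial v.1 (v.1 i * f.coeff v.1) * monomial a 1 =
      (v.1 i * f.coeff v.1) • monomial (a + v.1) (1 : ℂ) := by
    rw [monomial_mul, add_comm, smul_monomial, smul_eq_mul]
  rw [hmul, ← smul_sub]
  refine Submodule.smul_mem _ _ ?_
  simpa using monomial_sub_tightShift_monomial_mem_spanOn (K := ℂ) hslow (.single v 1) a

variable [Fintype σ] [LinearOrder (NonzeroExponent f)]
  (W : GenericShift (Subtype.val : NonzeroExponent f → σ →₀ ℕ))

lemma exists_sum_X_mul_pderiv_mul_eq (hf : Nondegenerate f) {h : σ → MvPolynomial σ ℂ} {r : ℝ}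
    (hg : ∑ i, X i * pderiv i f * h i ∈ spanOn (basisMonomials σ ℂ) {a | W.deg a ≤ r + 1}) :
    ∃ h' : σ → MvPolynomial σ ℂ,
      (∀ i, h' i ∈ spanOn (basisMonomials σ ℂ) {a | W.deg a ≤ r}) ∧
        ∑ i, X i * pderiv i f * h' i = ∑ i, X i * pderiv i f * h i := by
  obtain ⟨k, hk, hX⟩ := exists_X_pow_mem hf W.deg_add_le
  let x₀ : σ ⊕ NonzeroExponent f → End ℂ (MvPolynomial σ ℂ) :=
    Sum.elim (fun i => tightAction ℂ W.deg_add_le (eulerSymbol f i)) 0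
  let x : σ ⊕ NonzeroExponent f → End ℂ (MvPolynomial σ ℂ) :=
    Sum.elim (fun i => LinearMap.mulLeft ℂ (X i * pderiv i f)) 0
  have h₀ : ∀ j a, x₀ j (basisMonomials σ ℂ a) ∈
      spanOn (basisMonomials σ ℂ) {a' | W.deg a' = W.deg a + 1}
    | .inl i, a => by
      rw [coe_basisMonomials]
      exact tightAction_eulerSymbol_monomial_mem i a
    | .inr _, _ => Submodule.zero_mem _
  have hlow : ∀ j a, (x j - x₀ j) (basisMonomials σ ℂ a) ∈
      spanOn (basisMonomials σ ℂ) {a' | W.deg a' < W.deg a + 1}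
    | .inl i, a => by
      rw [coe_basisMonomials]
      exact mulLeft_sub_tightAction_eulerSymbol_monomial_mem i a
    | .inr _, a => by simp [x, x₀]
  have hcomm : Pairwise fun i j => Commute (x i) (x j)
    | .inl _, .inl _, _ => LinearMap.ext fun g => mul_left_comm _ _ _
    | .inr _, _, _ => Commute.zero_left _
    | .inl _, .inr _, _ => Commute.zero_right _
  have hex : KoszulExact x₀ (Finset.univ.map .inl) 1 := by
    convert GenericShift.koszulExact_tightAction hk hX
  obtain ⟨h', hdeg, heq⟩ := hex.exists_sum_eq W.finite_setOf_deg_le h₀ hlow hcomm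
    (h := Sum.elim h 0) (r := r) (by simpa [x, mul_assoc] using hg)
  exact ⟨fun i => h' (.inl i), fun i => hdeg (.inl i), by simpa [x, mul_assoc] using heq⟩

theorem mem_span_of_mem_LIdeal (hf : Nondegenerate f) {g : MvPolynomial σ ℂ} (hg : g ∈ LIdeal f)
    (hdeg : ∀ a ∈ g.support, W.deg a ≤ W.deg 0 + 1) :
    g ∈ Submodule.span ℂ (Set.range fun i => X i * pderiv i f) := by
  obtain ⟨h, rfl⟩ := Ideal.mem_span_range_iff_exists_fun.mp hg
  simp only [mul_comm (h _)] at hdeg ⊢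
  obtain ⟨h', hh', heq⟩ := exists_sum_X_mul_pderiv_mul_eq W hf (h := h) (r := W.deg 0)
    (mem_spanOn_iff.mpr fun a ha => hdeg a (mem_support_iff.mpr ha))
  rw [← heq]
  refine Submodule.sum_mem _ fun i _ => ?_
  have hC : h' i = C (coeff 0 (h' i)) := by
    ext a
    rw [coeff_C]
    split_ifs with ha
    · rw [ha]
    · by_contra hne
      exact (GenericShift.deg_zero_lt (W := W) (Ne.symm ha)).not_ge
        (mem_spanOn_iff.mp (hh' i) a hne)
  rw [hC, mul_comm, ← smul_eq_C_mul]
  exact Submodule.smul_mem _ _ (Submodule.subset_span ⟨i, rfl⟩)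

end Strictness

section NewtonFunction

open scoped Pointwise

variable {σ : Type*} [DecidableEq σ] {f : MvPolynomial σ ℂ}

lemma isConvenientFamily_of_convenient (hf : Convenient f) :
    IsConvenientFamily (Subtype.val : NonzeroExponent f → σ →₀ ℕ) where
  ne_zero v := Finset.ne_of_mem_erase v.2
  exists_single i := by
    obtain ⟨k, hk, hne⟩ := hf i
    exact ⟨⟨.single i k, Finset.mem_erase.mpr ⟨by simpa using Nat.one_le_iff_ne_zero.mp hk,
      mem_support_iff.mpr hne⟩⟩, k, Nat.one_le_iff_ne_zero.mp hk, rfl⟩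

lemma mem_newtonPolytope_iff {x : σ → ℝ} : x ∈ newtonPolytope f ↔
    ∃ c : NonzeroExponent f → ℝ, 0 ≤ c ∧ ∑ v, c v ≤ 1 ∧
      Fintype.linearCombination ℝ (toR ∘ Subtype.val) c = x := by
  let L : (NonzeroExponent f → ℝ) →ₗ[ℝ] σ → ℝ := Fintype.linearCombination ℝ (toR ∘ Subtype.val)
  let S : Set (NonzeroExponent f → ℝ) := Set.Ici 0 ∩ {c | ∑ v, c v ≤ 1}
  have hS : Convex ℝ S := (convex_Ici 0).inter <| convex_halfSpace_le
    ⟨fun c d => Finset.sum_add_distrib, fun r c => (Finset.mul_sum ..).symm⟩ 1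
  constructor
  · intro hx
    have hle : newtonPolytope f ⊆ L '' S := by
      have hzero : 0 ∈ L '' S := ⟨0, by simp [S], map_zero L⟩
      refine convexHull_min ?_ (hS.linear_image L)
      rintro _ (rfl | ⟨m, hm, rfl⟩)
      · exact hzero
      · by_cases h : m = 0
        · rwa [h, toR_zero]
        · exact ⟨Pi.single ⟨m, Finset.mem_erase.mpr ⟨h, hm⟩⟩ 1, by simp [S], by simp [L]⟩
    obtain ⟨c, ⟨hc, hsum⟩, rfl⟩ := hle hx
    exact ⟨c, hc, hsum, rfl⟩
  · rintro ⟨c, hc, hsum, rfl⟩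
    have hmem := (convex_convexHull ℝ _ : Convex ℝ (newtonPolytope f)).sum_mem
      (t := .univ) (w := fun o : Option (NonzeroExponent f) => o.elim (1 - ∑ v, c v) c)
      (z := fun o => o.elim 0 fun v => toR v.1) ?_ (by rw [Fintype.sum_option]; simp) ?_
    · simpa [newtonPolytope, Fintype.sum_option, Fintype.linearCombination_apply] using hmem
    · rintro (_ | v) -
      exacts [sub_nonneg.mpr hsum, hc v]
    · rintro (_ | v) -
      exacts [subset_convexHull ℝ _ (.inl rfl),
        toR_mem_newtonPolytope (Finset.mem_of_mem_erase v.2)]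

lemma mem_smul_newtonPolytope_iff {r : ℝ} (hr : 0 < r) {x : σ → ℝ} :
    x ∈ r • newtonPolytope f ↔ ∃ c : NonzeroExponent f → ℝ, 0 ≤ c ∧ ∑ v, c v ≤ r ∧
      Fintype.linearCombination ℝ (toR ∘ Subtype.val) c = x := by
  constructor
  · rintro ⟨y, hy, rfl⟩
    obtain ⟨c, hc, hsum, rfl⟩ := mem_newtonPolytope_iff.mp hy
    refine ⟨r • c, smul_nonneg hr.le hc, ?_, map_smul ..⟩
    simpa only [Pi.smul_apply, smul_eq_mul, ← Finset.mul_sum] using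
      mul_le_of_le_one_right hr.le hsum
  · rintro ⟨c, hc, hsum, rfl⟩
    rw [Set.mem_smul_set_iff_inv_smul_mem₀ hr.ne', ← map_smul]
    refine mem_newtonPolytope_iff.mpr ⟨r⁻¹ • c, smul_nonneg (inv_nonneg.mpr hr.le) hc, ?_, rfl⟩
    simpa only [Pi.smul_apply, smul_eq_mul, ← Finset.mul_sum] using
      inv_mul_le_one_of_le₀ hsum hr.le

lemma exists_sum_lt_of_nu_lt [Finite σ] (hf : Convenient f) {x : σ → ℝ} (hx : 0 ≤ x) {r : ℝ}
    (h : nu f x < r) : ∃ c : NonzeroExponent f → ℝ, 0 ≤ c ∧ ∑ v, c v < r ∧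
      Fintype.linearCombination ℝ (toR ∘ Subtype.val) c = x := by
  cases nonempty_fintype σ
  have hne : {t : ℝ | 0 < t ∧ x ∈ t • newtonPolytope f}.Nonempty := by
    obtain ⟨c, hc, -, hcx⟩ :=
      (isConvenientFamily_of_convenient hf).exists_nonneg_linearCombination_eq hx
    have hpos : 0 < ∑ v, c v + 1 :=
      add_pos_of_nonneg_of_pos (Finset.sum_nonneg fun v _ => hc v) one_pos
    exact ⟨_, hpos, (mem_smul_newtonPolytope_iff hpos).mpr ⟨c, hc, (lt_add_one _).le, hcx⟩⟩
  obtain ⟨t, ⟨ht, hxt⟩, htr⟩ := exists_lt_of_csInf_lt hne h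
  obtain ⟨c, hc, hsum, hcx⟩ := (mem_smul_newtonPolytope_iff ht).mp hxt
  exact ⟨c, hc, hsum.trans_lt htr, hcx⟩

lemma GenericShift.deg_le_of_nu_le [Fintype σ] [LinearOrder (NonzeroExponent f)]
    (W : GenericShift (Subtype.val : NonzeroExponent f → σ →₀ ℕ)) (hf : Convenient f) {a : σ →₀ ℕ}
    {r : ℝ} (h : nu f (toR a) ≤ r) : W.deg a ≤ W.deg 0 + r := by
  refine le_of_forall_gt fun t ht => ?_
  obtain ⟨c, hc, hsum, hca⟩ := exists_sum_lt_of_nu_lt hf (fun i => Nat.cast_nonneg _)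
    (h.trans_lt (lt_sub_iff_add_lt'.mpr ht))
  linarith [W.deg_le_add_deg_zero hc hca]

lemma X_mul_pderiv_mem_Nle (i : σ) : X i * pderiv i f ∈ Nle f 1 := fun _ hm =>
  gauge_le_one_of_mem (toR_mem_newtonPolytope
    (Finset.mem_of_mem_erase (support_X_mul_pderiv_subset f i hm)))

end NewtonFunction

section Dimension

open Module

section Rank

variable {K V : Type*} [Field K] [AddCommGroup V] [Module K V]

lemma finrank_map_mkQ_add_finrank_inf (A Q : Submodule K V) [FiniteDimensional K A] :
    finrank K (A.map Q.mkQ) + finrank K ↥(A ⊓ Q) = finrank K A := by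
  rw [← LinearMap.finrank_range_add_finrank_ker (Q.mkQ.domRestrict A),
    LinearMap.range_domRestrict, LinearMap.ker_domRestrict, Submodule.ker_mkQ,
    (Submodule.equivSubtypeMap A _).finrank_eq, Submodule.map_comap_subtype]

end Rank

lemma finiteDimensional_restrictSupport {σ : Type*} (K : Type*) [Field K] {s : Set (σ →₀ ℕ)}
    (hs : s.Finite) : FiniteDimensional K (restrictSupport K s) :=
  have := hs.to_subtype
  .of_basis (basisRestrictSupport K s)

lemma finrank_restrictSupport {σ : Type*} (K : Type*) [Field K] (s : Set (σ →₀ ℕ)) :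
    finrank K (restrictSupport K s) = s.ncard :=
  (finrank_eq_nat_card_basis (basisRestrictSupport K s)).trans (Nat.card_coe_set_eq s)

variable {σ : Type*} {f : MvPolynomial σ ℂ}

lemma one_le_nu_single [Finite σ] (hf : Convenient f) {i : σ} {K : ℕ} (hK : K ≠ 0)
    (hmax : ∀ k, f.coeff (.single i k) ≠ 0 → k ≤ K) : 1 ≤ nu f (toR (.single i K)) := by
  classical
  by_contra! h
  obtain ⟨c, hc, hsum, hcx⟩ := exists_sum_lt_of_nu_lt hf (fun _ => Nat.cast_nonneg _) h
  have hcoord (j : σ) : ∑ v, c v * v.1 j = (Finsupp.single i K j : ℝ) := by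
    simpa [Fintype.linearCombination_apply, toR] using congrFun hcx j
  have hle (v : NonzeroExponent f) : c v * v.1 i ≤ c v * K := by
    rcases (show 0 ≤ c v from hc v).eq_or_lt' with hv | hv
    · simp [hv]
    have hsingle : v.1 = .single i (v.1 i) := by
      ext j
      rcases eq_or_ne j i with rfl | hji
      · simp
      · have hzero := (Finset.sum_eq_zero_iff_of_nonneg fun v _ =>
          mul_nonneg (hc v) (Nat.cast_nonneg _)).mp ((hcoord j).trans (by simp [hji.symm])) v
            (Finset.mem_univ v)
        simpa [hv.ne', hji.symm] using hzero
    refine mul_le_mul_of_nonneg_left (Nat.cast_le.mpr (hmax _ ?_)) (hc v)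
    exact hsingle ▸ mem_support_iff.mp (Finset.mem_of_mem_erase v.2)
  refine lt_irrefl (K : ℝ) ?_
  calc (K : ℝ) = ∑ v, c v * v.1 i := by simpa using (hcoord i).symm
    _ ≤ ∑ v, c v * K := Finset.sum_le_sum fun v _ => hle v
    _ = (∑ v, c v) * K := (Finset.sum_mul ..).symm
    _ < K := mul_lt_of_lt_one_left (Nat.cast_pos.mpr (Nat.pos_of_ne_zero hK)) hsum

lemma exists_one_le_nu_single [Finite σ] (hf : Convenient f) (i : σ) :
    ∃ K : ℕ, K ≠ 0 ∧ f.coeff (.single i K) ≠ 0 ∧ 1 ≤ nu f (toR (.single i K)) := by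
  obtain ⟨k, hk, hne⟩ := hf i
  have hfin : {k | f.coeff (.single i k) ≠ 0}.Finite := by
    simpa only [Set.preimage, Finset.mem_coe, MvPolynomial.mem_support_iff] using
      f.support.finite_toSet.preimage (Finsupp.single_injective i).injOn
  obtain ⟨K, hK, hmax⟩ := Set.exists_max_image _ id hfin ⟨k, hne⟩
  have hK₀ : K ≠ 0 := Nat.one_le_iff_ne_zero.mp (hk.trans (hmax k hne))
  exact ⟨K, hK₀, hK, one_le_nu_single hf hK₀ hmax⟩

lemma exists_genericShift [DecidableEq σ] [Fintype σ] (hf : Convenient f) :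
    ∃ _ : LinearOrder (NonzeroExponent f),
      Nonempty (GenericShift (Subtype.val : NonzeroExponent f → σ →₀ ℕ)) := by
  classical
  exact ⟨linearOrderOfSTO WellOrderingRel,
    (isConvenientFamily_of_convenient hf).nonempty_genericShift⟩

lemma finite_setOf_nu_le [Finite σ] (hf : Convenient f) (r : ℝ) :
    {a | nu f (toR a) ≤ r}.Finite := by
  classical
  cases nonempty_fintype σ
  obtain ⟨_, ⟨W⟩⟩ := exists_genericShift hf
  exact (W.finite_setOf_deg_le (W.deg 0 + r)).subset fun _ => W.deg_le_of_nu_le hf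

variable [DecidableEq σ]

lemma Nle_eq_restrictSupport (f : MvPolynomial σ ℂ) (α : ℝ) :
    Nle f α = restrictSupport ℂ {a | nu f (toR a) ≤ α} := rfl

lemma Nlt_eq_restrictSupport (f : MvPolynomial σ ℂ) (α : ℝ) :
    Nlt f α = restrictSupport ℂ {a | nu f (toR a) < α} := rfl

lemma Nlt_le_Nle (f : MvPolynomial σ ℂ) (α : ℝ) : Nlt f α ≤ Nle f α :=
  fun _ hg a ha => (hg a ha).le

lemma grN_eq_map_Nle (f : MvPolynomial σ ℂ) (α : ℝ) : grN f α =
    (Nle f α).map (Nlt f α ⊔ (LIdeal f).restrictScalars ℂ).mkQ := by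
  rw [grN, Submodule.map_sup, sup_eq_left, Submodule.map_le_iff_le_comap]
  refine (le_trans ?_ (Submodule.ker_mkQ _).ge).trans (LinearMap.ker_le_comap _)
  exact le_sup_right

section Finite

variable [Finite σ]

lemma finrank_Nle_one (hf : Convenient f) : finrank ℂ (Nle f 1) =
    finrank ℂ (Nlt f 1) + {a | nu f (toR a) = 1}.ncard := by
  have hfin := finite_setOf_nu_le hf 1
  have hlt : {a | nu f (toR a) < 1}.Finite := hfin.subset fun a ha => le_of_lt (α := ℝ) ha
  have heq : {a | nu f (toR a) = 1}.Finite := hfin.subset fun a ha => le_of_eq (α := ℝ) ha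
  have hdisj : Disjoint {a | nu f (toR a) < 1} {a | nu f (toR a) = 1} :=
    Set.disjoint_left.mpr fun a ha => ne_of_lt (α := ℝ) ha
  have hunion : {a | nu f (toR a) ≤ 1} = {a | nu f (toR a) < 1} ∪ {a | nu f (toR a) = 1} :=
    Set.ext fun a => le_iff_lt_or_eq (a := nu f (toR a))
  rw [Nle_eq_restrictSupport, Nlt_eq_restrictSupport, finrank_restrictSupport,
    finrank_restrictSupport, hunion, Set.ncard_union_eq hdisj hlt heq]

lemma Nle_inf_sup_LIdeal (hc : Convenient f) (hf : Nondegenerate f) :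
    Nle f 1 ⊓ (Nlt f 1 ⊔ (LIdeal f).restrictScalars ℂ) =
      Nlt f 1 ⊔ Submodule.span ℂ (Set.range fun i => X i * pderiv i f) := by
  have hspan : Submodule.span ℂ (Set.range fun i => X i * pderiv i f) ≤
      Nle f 1 ⊓ (LIdeal f).restrictScalars ℂ := by
    rw [Submodule.span_le]
    rintro _ ⟨i, rfl⟩
    exact ⟨X_mul_pderiv_mem_Nle i, Ideal.subset_span ⟨i, rfl⟩⟩
  have hinf : Nle f 1 ⊓ (LIdeal f).restrictScalars ℂ ≤
      Submodule.span ℂ (Set.range fun i => X i * pderiv i f) := by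
    cases nonempty_fintype σ
    obtain ⟨_, ⟨W⟩⟩ := exists_genericShift hc
    exact fun g hg => mem_span_of_mem_LIdeal W hf hg.2 fun a ha => W.deg_le_of_nu_le hc (hg.1 a ha)
  rw [inf_comm, sup_inf_assoc_of_le _ (Nlt_le_Nle f 1), inf_comm, hinf.antisymm hspan]

end Finite

variable [Fintype σ]

/-- Among the `u_j ∂f/∂u_j`, only the `i`-th one involves the largest pure power of `u_i`, which
lies on the Newton boundary. -/
lemma eq_zero_of_sum_smul_mem_Nlt (hf : Convenient f) {c : σ → ℂ}
    (h : ∑ i, c i • (X i * pderiv i f) ∈ Nlt f 1) : c = 0 := by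
  funext i
  obtain ⟨K, hK, hne, hnu⟩ := exists_one_le_nu_single hf i
  have hzero : (∑ j, c j • (X j * pderiv j f)).coeff (.single i K) = 0 :=
    notMem_support_iff.mp fun hmem => (h _ hmem).not_ge hnu
  simpa [coeff_sum, coeff_X_mul_pderiv, Finsupp.single_apply, hK, hne] using hzero

lemma finrank_Nlt_sup_span (hf : Convenient f) :
    finrank ℂ ↥(Nlt f 1 ⊔ Submodule.span ℂ (Set.range fun i => X i * pderiv i f)) =
      finrank ℂ (Nlt f 1) + Fintype.card σ := by
  have hindep : LinearIndependent ℂ fun i => X i * pderiv i f :=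
    Fintype.linearIndependent_iff.mpr fun c h =>
      congrFun (eq_zero_of_sum_smul_mem_Nlt hf (h ▸ Submodule.zero_mem _))
  have hdisj : Disjoint (Nlt f 1) (Submodule.span ℂ (Set.range fun i => X i * pderiv i f)) := by
    refine Submodule.disjoint_def.mpr fun g hg hspan => ?_
    obtain ⟨c, rfl⟩ := (Submodule.mem_span_range_iff_exists_fun ℂ).mp hspan
    simp [eq_zero_of_sum_smul_mem_Nlt hf hg]
  have : FiniteDimensional ℂ (Nlt f 1) := finiteDimensional_restrictSupport ℂ <|
    (finite_setOf_nu_le hf 1).subset fun _ => le_of_lt (α := ℝ)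
  have := FiniteDimensional.span_of_finite ℂ (Set.finite_range fun i => X i * pderiv i f)
  rw [← finrank_span_eq_card hindep, ← Submodule.finrank_sup_add_finrank_inf_eq,
    hdisj.eq_bot, finrank_bot, add_zero]

theorem grDim_one_add_card (hc : Convenient f) (hf : Nondegenerate f) :
    grDim f 1 + Fintype.card σ = {a | nu f (toR a) = 1}.ncard := by
  have : FiniteDimensional ℂ (Nle f 1) :=
    finiteDimensional_restrictSupport ℂ (finite_setOf_nu_le hc 1)
  have hrank := finrank_map_mkQ_add_finrank_inf (Nle f 1) (Nlt f 1 ⊔ (LIdeal f).restrictScalars ℂ)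
  rw [← grN_eq_map_Nle, Nle_inf_sup_LIdeal hc hf, finrank_Nlt_sup_span hc,
    finrank_Nle_one hc] at hrank
  exact Nat.add_left_cancel ((Nat.add_left_comm ..).trans hrank)

end Dimension

end NewtonSpectrum

open ToricNewton in
/-- the multiplicity of `1` in the toric Newton spectrum equals the
number of lattice points on the Newton boundary (i.e. with `ν(v) = 1`) minus `n`. -/
theorem toric_newton_spectrum_at_one {n : ℕ} (hn : 1 ≤ n) (f : MvPolynomial (Fin n) ℂ)
    (hconv : Convenient f) (hnd : Nondegenerate f) :
    (grDim f (1 : ℝ) : ℤ) =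
      ({v : Fin n → ℕ | nu f (natToR v) = (1 : ℝ)}.ncard : ℤ) - (n : ℤ) := by
  have hcard := NewtonSpectrum.grDim_one_add_card hconv hnd
  have hboundary : {v : Fin n → ℕ | nu f (natToR v) = 1} =
      Finsupp.equivFunOnFinite '' {a | nu f (toR a) = 1} :=
    (Finsupp.equivFunOnFinite.image_eq_preimage_symm {a | nu f (toR a) = 1}).symm
  rw [hboundary, Set.ncard_image_of_injective _ Finsupp.equivFunOnFinite.injective, ← hcard,
    Fintype.card_fin, Nat.cast_add, add_sub_cancel_right]
end

section
/- Let f ∈ ℬ be convenient and Newton nondegenerate. Then dim_ℂ gr^𝒩_0(ℬ/ℒ) = 1; that is, the value 0 appears in the toric Newton spectrum of f with multiplicity exactly one. -/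
open MvPolynomial

/-!
The weight-zero part of `ℬ` is spanned by `1`. Indeed `P` is bounded, so the gauge is positive on
every nonzero vector of the cone over `P`, and by convenience this cone contains every exponent,
so that `ν m = 0` only for `m = 0`. Hence `gr_0(ℬ/ℒ)` is spanned by the class of `1`. As
`𝒩_{<0} ℬ = 0`, this class vanishes only if `1 ∈ ℒ`, which is excluded because the generators
`uᵢ ∂f/∂uᵢ` have no constant term.
-/

open scoped Pointwise Topology

theorem gauge_pos_of_mem_smul {E : Type*} [AddCommGroup E] [Module ℝ E] [TopologicalSpace E]
    [T1Space E] {s : Set E} (hs : Bornology.IsVonNBounded ℝ s) {x : E} (hx : x ≠ 0) {a : ℝ}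
    (ha : 0 < a) (hxa : x ∈ a • s) : 0 < gauge s x := by
  have hnhds : {x}ᶜ ∈ 𝓝 (0 : E) := isOpen_compl_singleton.mem_nhds hx.symm
  obtain ⟨r, hr, hsub⟩ := (hs hnhds).exists_pos
  refine (inv_pos.mpr hr).trans_le (le_csInf ⟨a, ha, hxa⟩ ?_)
  rintro c ⟨hc, y, hy, rfl⟩
  by_contra! hcr
  have hrc : r ≤ ‖c⁻¹‖ := ((lt_inv_comm₀ hc hr).mp hcr).le.trans (le_abs_self _)
  obtain ⟨z, hz, rfl⟩ := hsub c⁻¹ hrc hy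
  exact hz (smul_inv_smul₀ hc.ne' z).symm

namespace ToricNewton

section NewtonFunction

variable {σ : Type*} {f : MvPolynomial σ ℂ}

@[simp]
theorem toR_zero : toR (0 : σ →₀ ℕ) = 0 := by
  ext; simp [toR]

theorem toR_add (m m' : σ →₀ ℕ) : toR (m + m') = toR m + toR m' := by
  ext; simp [toR]

theorem toR_injective : Function.Injective (toR : (σ →₀ ℕ) → σ → ℝ) := fun _ _ h =>
  Finsupp.ext fun i => Nat.cast_injective (congrFun h i)

variable (f) in
theorem convex_newtonPolytope : Convex ℝ (newtonPolytope f) :=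
  convex_convexHull ℝ _

variable (f) in
theorem zero_mem_newtonPolytope : 0 ∈ newtonPolytope f :=
  subset_convexHull ℝ _ (Or.inl rfl)

theorem toR_mem_newtonPolytope {m : σ →₀ ℕ} (hm : f.coeff m ≠ 0) : toR m ∈ newtonPolytope f :=
  subset_convexHull ℝ _ (Or.inr ⟨m, mem_support_iff.mpr hm, rfl⟩)

variable (f) in
theorem isCompact_newtonPolytope : IsCompact (newtonPolytope f) :=
  ((Set.finite_singleton 0).union (f.support.finite_toSet.image toR)).isCompact_convexHull ℝ

theorem Convenient.toR_mem_hull (hf : Convenient f) (m : σ →₀ ℕ) :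
    toR m ∈ ConvexCone.hull ℝ (newtonPolytope f) := by
  have hzero : 0 ∈ ConvexCone.hull ℝ (newtonPolytope f) :=
    ConvexCone.subset_hull (zero_mem_newtonPolytope f)
  induction m using Finsupp.induction_linear with
  | zero => simpa using hzero
  | add m m' hm hm' => simpa only [toR_add] using add_mem hm hm'
  | single i a =>
    obtain rfl | ha := a.eq_zero_or_pos
    · simpa using hzero
    obtain ⟨k, hk, hcoeff⟩ := hf i
    have hk' : (0 : ℝ) < k := by exact_mod_cast hk
    have hscale : toR (Finsupp.single i a) = (a / k : ℝ) • toR (Finsupp.single i k) := by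
      ext j
      by_cases hj : i = j
      · simp [toR, hj, hk'.ne']
      · simp [toR, hj]
    rw [hscale]
    exact ConvexCone.smul_mem _ (by positivity)
      (ConvexCone.subset_hull (toR_mem_newtonPolytope hcoeff))

theorem Convenient.nu_toR_pos (hf : Convenient f) {m : σ →₀ ℕ} (hm : m ≠ 0) :
    0 < nu f (toR m) := by
  obtain ⟨a, ha, hma⟩ :=
    (ConvexCone.mem_hull_of_convex (convex_newtonPolytope f)).mp (hf.toR_mem_hull m)
  exact gauge_pos_of_mem_smul ((isCompact_newtonPolytope f).isVonNBounded ℝ)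
    (toR_zero (σ := σ) ▸ toR_injective.ne hm) ha hma

theorem Convenient.nu_toR_nonpos_iff (hf : Convenient f) {m : σ →₀ ℕ} :
    nu f (toR m) ≤ 0 ↔ m = 0 := by
  refine ⟨fun h => ?_, ?_⟩
  · by_contra hm
    exact (hf.nu_toR_pos hm).not_ge h
  · rintro rfl
    simp [nu]

end NewtonFunction

section GradedPiece

variable {σ : Type*} [DecidableEq σ] {f : MvPolynomial σ ℂ}

theorem Convenient.Nle_zero_eq_one (hf : Convenient f) : Nle f 0 = 1 := by
  have hsupp : Nle f 0 = restrictSupport ℂ 0 :=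
    SetLike.ext fun _ => forall₂_congr fun _ _ => hf.nu_toR_nonpos_iff
  rw [hsupp, restrictSupport_zero]

variable (f) in
theorem Nlt_zero_eq_bot : Nlt f 0 = ⊥ := by
  refine (Submodule.eq_bot_iff _).mpr fun g hg => support_eq_empty.mp ?_
  exact Finset.eq_empty_of_forall_notMem fun m hm => (gauge_nonneg _).not_gt (hg m hm)

variable (f) in
theorem grN_eq_map_Nle (α : ℝ) :
    grN f α = (Nle f α).map (Nlt f α ⊔ (LIdeal f).restrictScalars ℂ).mkQ := by
  have hL : (LIdeal f).restrictScalars ℂ ≤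
      LinearMap.ker (Nlt f α ⊔ (LIdeal f).restrictScalars ℂ).mkQ := by
    rw [Submodule.ker_mkQ]
    exact le_sup_right
  rw [grN, Submodule.map_sup, LinearMap.le_ker_iff_map.mp hL, sup_bot_eq]

end GradedPiece

theorem one_notMem_LIdeal {σ : Type*} (f : MvPolynomial σ ℂ) : 1 ∉ LIdeal f := by
  have hle : LIdeal f ≤ RingHom.ker (constantCoeff (σ := σ) (R := ℂ)) := by
    refine Ideal.span_le.mpr ?_
    rintro _ ⟨i, rfl⟩
    simp [RingHom.mem_ker]
  intro h
  simpa [RingHom.mem_ker] using hle h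

end ToricNewton

open ToricNewton in
theorem toric_newton_spectrum_at_zero_general {σ : Type*} [DecidableEq σ] (f : MvPolynomial σ ℂ)
    (hconv : Convenient f) : grDim f 0 = 1 := by
  have hspan : grN f 0 = ℂ ∙ (Nlt f 0 ⊔ (LIdeal f).restrictScalars ℂ).mkQ 1 := by
    rw [grN_eq_map_Nle, hconv.Nle_zero_eq_one, Submodule.one_eq_span,
      Submodule.map_span, Set.image_singleton]
  have hone : (Nlt f 0 ⊔ (LIdeal f).restrictScalars ℂ).mkQ 1 ≠ 0 := by
    rw [Submodule.mkQ_apply, Ne, Submodule.Quotient.mk_eq_zero, Nlt_zero_eq_bot, bot_sup_eq]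
    exact one_notMem_LIdeal f
  rw [grDim, hspan]
  exact finrank_span_singleton hone

open ToricNewton in
/-- the value `0` appears in the toric Newton spectrum with
multiplicity exactly one. -/
theorem toric_newton_spectrum_at_zero {n : ℕ} (hn : 1 ≤ n) (f : MvPolynomial (Fin n) ℂ)
    (hconv : Convenient f) (hnd : Nondegenerate f) :
    grDim f (0 : ℝ) = 1 :=
  toric_newton_spectrum_at_zero_general f hconv
end
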